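/- Fix d ≥ 1, an integer L ≥ 2, β > 1, integers k > ℓ ≥ 1 with γ = 2^{−k} and δ = ℓ/k, and an integer 0 ≤ N_p ≤ 2^{dk}L^d; set m = 2N_p/(2^{dk}L^d) − 1. Let σ* : T_L → [−1,1] be measurable with L^{−d}∫_{T_L}σ*(r)dr = m, F(σ*) = inf{ F(σ) : σ : T_L → [−1,1] measurable, L^{−d}∫_{T_L}σ(r)dr = m }, and assume σ* is Lipschitz with Lipschitz constant Λ. Then there is a constant c > 0, depending only on d, β, J and Λ, such that for every coarse-grained configuration σ_δ ∈ Ω^{(δ)}_{L,γ} with L^{−d}∫_{T_L}σ_δ(r)dr = m (so that E(σ_δ) ⊆ Ω_{L,γ,N_p}), | log P_{can,N_p}[E(σ_δ)] + β γ^{−d} ( F(σ_δ) − F(σ*) ) | ≤ c · γ^{−d} L^d (γ^δ + γ^{d(1−δ)}) log(1/γ). -/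

import Mathlib

open MeasureTheory Real

/-- The `d`-dimensional torus `(ℝ/Lℤ)^d` with its Lebesgue (Haar) measure. -/
abbrev Torus (d L : ℕ) := Fin d → AddCircle (L : ℝ)

/-- Geodesic (Euclidean) distance on the torus. -/
noncomputable def torusDist {d L : ℕ} (x y : Torus d L) : ℝ :=
  Real.sqrt (∑ i, (dist (x i) (y i)) ^ 2)

/-- The entropy function `i`. (`Real.log 0 = 0` gives the convention `0 · log 0 = 0`.) -/
noncomputable def ient (m : ℝ) : ℝ :=
  (1 - m) / 2 * Real.log ((1 - m) / 2) + (1 + m) / 2 * Real.log ((1 + m) / 2)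

/-- The hypotheses on the Kac interaction potential `J : [0,∞) → ℝ`: nonnegative, bounded,
continuous, supported in `[0,1]`, smooth and strictly decreasing on `[0,1]`, and normalized
so that `∫_{ℝ^d} J(|r|) dr = 1`. -/
structure KacPotential (d : ℕ) (J : ℝ → ℝ) : Prop where
  nonneg : ∀ r, 0 ≤ J r
  bounded : ∃ M, ∀ r, |J r| ≤ M
  continuous : Continuous J
  support : ∀ r, 1 < r → J r = 0
  strictAnti : StrictAntiOn J (Set.Icc 0 1)
  smooth : ContDiffOn ℝ (⊤ : ℕ∞) J (Set.Icc 0 1)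
  normalized : (∫ r : EuclideanSpace ℝ (Fin d), J ‖r‖) = 1

/-- The Gates–Penrose–Lebowitz free energy functional
`F(σ) = (1/β)∫ i(σ(x)) dx − (1/2)∫∫ J(|x−y|) σ(x) σ(y) dx dy`. -/
noncomputable def GPL (d L : ℕ) [Fact ((0:ℝ) < L)] (β : ℝ) (J : ℝ → ℝ)
    (σ : Torus d L → ℝ) : ℝ :=
  (1 / β) * (∫ x, ient (σ x))
    - (1 / 2) * ∫ x, ∫ y, J (torusDist x y) * σ x * σ y

open scoped Classical

/-- The representative coordinate in `[0, L)` of a point of the circle `ℝ/Lℤ`. -/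
noncomputable def torusCoord {L : ℕ} [Fact ((0:ℝ) < L)] (x : AddCircle (L:ℝ)) : ℝ :=
  ((AddCircle.equivIco (L:ℝ) 0) x).1

/-- Index of the dyadic cube of side `2^{-n}` (from the partition `Q^{(n)}`) containing `x`. -/
noncomputable def cubeIdx {d : ℕ} (L : ℕ) [Fact ((0:ℝ) < L)] (n : ℕ) (x : Torus d L) :
    Fin d → ℤ := fun i => ⌊torusCoord (x i) * 2 ^ n⌋

/-- The cube of the partition `Q^{(n)}` containing `x`. -/
noncomputable def cubeOf {d : ℕ} (L : ℕ) [Fact ((0:ℝ) < L)] (n : ℕ) (x : Torus d L) :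
    Set (Torus d L) := {y | cubeIdx L n y = cubeIdx L n x}

/-- Coarse graining `π^{(δ)}`: averaging over the cubes of side `2^{-n}` of `Q^{(n)}`. -/
noncomputable def coarse {d : ℕ} (L : ℕ) [Fact ((0:ℝ) < L)] (n : ℕ)
    (f : Torus d L → ℝ) : Torus d L → ℝ :=
  fun x => (∫ y in cubeOf L n x, f y) / (volume (cubeOf L n x)).toReal

/-- The microscopic lattice sites, indexing `γℤ^d ∩ T_L` with `γ = 2^{-k}`. -/
abbrev Site (d L k : ℕ) := Fin d → Fin (2 ^ k * L)

/-- Microscopic spin configurations (`true` = occupied, i.e. spin `+1`). -/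
abbrev ConfigSpace (d L k : ℕ) := Site d L k → Bool

/-- The spin value (`±1`) of a site. -/
def spin (b : Bool) : ℝ := if b then 1 else -1

/-- The position in the torus of a lattice site. -/
noncomputable def sitePos {d : ℕ} (L k : ℕ) (p : Site d L k) : Torus d L :=
  fun i => (((p i : ℝ) * (2:ℝ) ^ (-(k:ℤ)) : ℝ) : AddCircle (L:ℝ))

/-- The lattice site whose fine cube (of side `2^{-k}`) contains the point `x` of the torus. -/
noncomputable def siteOf {d : ℕ} (L k : ℕ) [Fact ((0:ℝ) < L)] (x : Torus d L) : Site d L k :=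
  fun i => ⟨(⌊torusCoord (x i) * 2 ^ k⌋).toNat % (2 ^ k * L),
    Nat.mod_lt _ (Nat.mul_pos (pow_pos (by norm_num) k)
      (by have h := (Fact.out : (0:ℝ) < L); exact_mod_cast h))⟩

/-- A microscopic configuration viewed as a `±1`-valued step function on the torus,
constant on each cube of the fine partition `Q^{(k)}`. -/
noncomputable def stepFun {d : ℕ} (L k : ℕ) [Fact ((0:ℝ) < L)]
    (s : ConfigSpace d L k) : Torus d L → ℝ :=
  fun x => spin (s (siteOf L k x))

/-- `γ = 2^{-k}`, the Kac scaling parameter. -/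
noncomputable def gam (k : ℕ) : ℝ := (2:ℝ) ^ (-(k:ℤ))

/-- The Kac Hamiltonian `H_{γ,L}(s) = -(γ^d/2) ∑_{x,y ∈ Λ_{L,γ}} J(|x-y|) s(x) s(y)`. -/
noncomputable def Ham {d : ℕ} (L k : ℕ) (J : ℝ → ℝ) (s : ConfigSpace d L k) : ℝ :=
  -((gam k) ^ d / 2) * ∑ p : Site d L k, ∑ q : Site d L k,
      J (torusDist (sitePos L k p) (sitePos L k q)) * spin (s p) * spin (s q)

/-- The number of occupied sites (sites with spin `+1`) of a configuration. -/
def numOnes {d : ℕ} (L k : ℕ) (s : ConfigSpace d L k) : ℕ :=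
  (Finset.univ.filter fun p => s p = true).card

/-- The canonical Gibbs probability, at inverse temperature `β` and particle number `Np`,
of an event `A` (as an event in `Ω_{L,γ,Np}`). -/
noncomputable def Pcan {d : ℕ} (L k : ℕ) (β : ℝ) (J : ℝ → ℝ) (Np : ℕ)
    (A : Set (ConfigSpace d L k)) : ℝ :=
  (∑ s ∈ Finset.univ.filter
      (fun s : ConfigSpace d L k => s ∈ A ∧ numOnes L k s = Np),
      Real.exp (-β * Ham L k J s)) /
  (∑ s ∈ Finset.univ.filter (fun s : ConfigSpace d L k => numOnes L k s = Np),
      Real.exp (-β * Ham L k J s))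

/-- The lift of a function on the torus to a (periodic) function on `ℝ^d`. -/
noncomputable def liftTorus {d L : ℕ} (φ : Torus d L → ℝ) : EuclideanSpace ℝ (Fin d) → ℝ :=
  fun v => φ (fun i => ((v i : ℝ) : AddCircle (L:ℝ)))

lemma torusCoord_mem {L : ℕ} [Fact ((0:ℝ) < L)] (x : AddCircle (L:ℝ)) :
    0 ≤ torusCoord x ∧ torusCoord x < L := by
  have h := ((AddCircle.equivIco (L:ℝ) 0) x).2
  unfold torusCoord
  constructor
  · exact h.1
  · have := h.2; simpa using this

lemma torusCoord_coe {L : ℕ} [Fact ((0:ℝ) < L)] (x : AddCircle (L:ℝ)) :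
    ((torusCoord x : ℝ) : AddCircle (L:ℝ)) = x := AddCircle.coe_equivIco

lemma measurable_torusCoord {L : ℕ} [Fact ((0:ℝ) < L)] :
    Measurable (torusCoord : AddCircle (L:ℝ) → ℝ) :=
  measurable_subtype_coe.comp (AddCircle.measurableEquivIco (L:ℝ) 0).measurable

lemma floor_lt_side {L n : ℕ} [Fact ((0:ℝ) < L)] (x : AddCircle (L:ℝ)) :
    ⌊torusCoord x * 2 ^ n⌋₊ < 2 ^ n * L := by
  have h := torusCoord_mem x
  rw [Nat.floor_lt (by have := h.1; positivity)]
  push_cast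
  have : (0:ℝ) < 2 ^ n := by positivity
  nlinarith [h.2]

lemma siteOf_val {d L n : ℕ} [Fact ((0:ℝ) < L)] (x : Torus d L) (i : Fin d) :
    (siteOf L n x i : ℕ) = ⌊torusCoord (x i) * 2 ^ n⌋₊ := by
  have h : (siteOf L n x i : ℕ) = ⌊torusCoord (x i) * 2 ^ n⌋₊ % (2 ^ n * L) := rfl
  rw [h, Nat.mod_eq_of_lt (floor_lt_side _)]

lemma siteOf_eq_iff {d L n : ℕ} [Fact ((0:ℝ) < L)] (x : Torus d L) (p : Site d L n) :
    siteOf L n x = p ↔ ∀ i, ⌊torusCoord (x i) * 2 ^ n⌋₊ = (p i : ℕ) := by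
  rw [funext_iff]
  refine forall_congr' fun i => ?_
  rw [Fin.ext_iff, siteOf_val]

lemma cubeIdx_eq_iff {d L n : ℕ} [Fact ((0:ℝ) < L)] (x y : Torus d L) :
    cubeIdx L n y = cubeIdx L n x ↔ siteOf L n y = siteOf L n x := by
  rw [siteOf_eq_iff, funext_iff]
  refine forall_congr' fun i => ?_
  rw [siteOf_val]
  unfold cubeIdx
  have hx := (torusCoord_mem (x i)).1
  have hy := (torusCoord_mem (y i)).1
  rw [← Int.natCast_floor_eq_floor (by positivity), ← Int.natCast_floor_eq_floor (by positivity)]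
  exact Nat.cast_inj

/-- cell of the partition -/
def cell {d L n : ℕ} [Fact ((0:ℝ) < L)] (p : Site d L n) : Set (Torus d L) :=
  {x | siteOf L n x = p}

lemma cubeOf_eq {d L n : ℕ} [Fact ((0:ℝ) < L)] (x : Torus d L) :
    cubeOf L n x = cell (siteOf L n x) := by
  ext y
  exact cubeIdx_eq_iff x y

/-- one dimensional cell -/
def cell1 (L n : ℕ) [Fact ((0:ℝ) < L)] (j : ℕ) : Set (AddCircle (L:ℝ)) :=
  {x | ⌊torusCoord x * 2 ^ n⌋₊ = j}

lemma measurableSet_cell1 (L n : ℕ) [Fact ((0:ℝ) < L)] (j : ℕ) :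
    MeasurableSet (cell1 L n j) := by
  have : Measurable (fun x : AddCircle (L:ℝ) => ⌊torusCoord x * 2 ^ n⌋₊) :=
    Nat.measurable_floor.comp (measurable_torusCoord.mul_const _)
  exact this (measurableSet_singleton j)

lemma volume_cell1 (L n : ℕ) [Fact ((0:ℝ) < L)] (j : ℕ) (hj : j < 2 ^ n * L) :
    volume (cell1 L n j) = ENNReal.ofReal ((2:ℝ) ^ n)⁻¹ := by
  rw [← (AddCircle.measurePreserving_mk (L:ℝ) 0).measure_preimage
    (measurableSet_cell1 L n j).nullMeasurableSet]
  rw [← MeasureTheory.Measure.restrict_congr_set (MeasureTheory.Ico_ae_eq_Ioc (μ := volume))]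
  have hpow : (0:ℝ) < 2 ^ n := by positivity
  have hm : MeasurableSet ((fun x : ℝ => (x : AddCircle (L:ℝ))) ⁻¹' cell1 L n j) :=
    AddCircle.measurable_mk' (measurableSet_cell1 L n j)
  rw [Measure.restrict_apply hm]
  have : (fun x : ℝ => (x : AddCircle (L:ℝ))) ⁻¹' cell1 L n j ∩ Set.Ico 0 (0 + (L:ℝ))
      = Set.Ico ((j:ℝ) / 2 ^ n) (((j:ℝ) + 1) / 2 ^ n) := by
    ext x
    simp only [Set.mem_inter_iff, Set.mem_preimage, cell1, Set.mem_setOf_eq]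
    have key : ∀ hx : x ∈ Set.Ico 0 (0 + (L:ℝ)), torusCoord (x : AddCircle (L:ℝ)) = x := by
      intro hx
      exact AddCircle.equivIco_coe_of_mem hx
    constructor
    · rintro ⟨h1, h2⟩
      rw [key h2, Nat.floor_eq_iff (by have := h2.1; positivity)] at h1
      constructor
      · rw [div_le_iff₀ hpow]; exact h1.1
      · rw [lt_div_iff₀ hpow]; exact h1.2
    · rintro ⟨h1, h2⟩
      rw [div_le_iff₀ hpow] at h1
      rw [lt_div_iff₀ hpow] at h2
      have hj' : (j:ℝ) + 1 ≤ 2 ^ n * L := by exact_mod_cast hj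
      have hx0 : 0 ≤ x := by
        by_contra hneg
        push Not at hneg
        have : (0:ℝ) ≤ j := by positivity
        nlinarith
      have hx : x ∈ Set.Ico 0 (0 + (L:ℝ)) := by
        refine ⟨hx0, ?_⟩
        rw [zero_add]
        by_contra hneg
        push Not at hneg
        nlinarith
      refine ⟨?_, hx⟩
      rw [key hx, Nat.floor_eq_iff (by positivity)]
      exact ⟨h1, h2⟩
  rw [this, Real.volume_Ico]
  congr 1
  field_simp
  ring

lemma cell_eq_pi {d L n : ℕ} [Fact ((0:ℝ) < L)] (p : Site d L n) :
    cell p = Set.pi Set.univ (fun i => cell1 L n (p i)) := by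
  ext x
  simp [cell, siteOf_eq_iff, cell1]

lemma measurableSet_cell {d L n : ℕ} [Fact ((0:ℝ) < L)] (p : Site d L n) :
    MeasurableSet (cell p) := by
  rw [cell_eq_pi]
  exact MeasurableSet.univ_pi fun i => measurableSet_cell1 _ _ _

lemma volume_cell {d L n : ℕ} [Fact ((0:ℝ) < L)] (p : Site d L n) :
    volume (cell p) = ENNReal.ofReal (((2:ℝ) ^ n)⁻¹ ^ d) := by
  rw [cell_eq_pi, volume_pi_pi]
  simp_rw [volume_cell1 L n _ (p _).2]
  rw [Finset.prod_const, Finset.card_univ, Fintype.card_fin, ENNReal.ofReal_pow (by positivity)]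

lemma volume_real_cell {d L n : ℕ} [Fact ((0:ℝ) < L)] (p : Site d L n) :
    (volume (cell p)).toReal = ((2:ℝ) ^ n)⁻¹ ^ d := by
  rw [volume_cell, ENNReal.toReal_ofReal (by positivity)]

lemma measurable_siteOf {d L n : ℕ} [Fact ((0:ℝ) < L)] :
    Measurable (siteOf L n : Torus d L → Site d L n) := by
  refine measurable_to_countable' fun p => measurableSet_cell p

lemma measurable_comp_siteOf {d L n : ℕ} [Fact ((0:ℝ) < L)] {α : Type*} [MeasurableSpace α]
    (g : Site d L n → α) : Measurable (fun x : Torus d L => g (siteOf L n x)) :=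
  (measurable_of_countable g).comp measurable_siteOf

/-- integral against a step function -/
lemma integral_site_mul {d L n : ℕ} [Fact ((0:ℝ) < L)] (g : Site d L n → ℝ)
    (f : Torus d L → ℝ) (hf : Integrable f) :
    ∫ x, g (siteOf L n x) * f x = ∑ p, g p * ∫ x in cell p, f x := by
  have h1 : ∀ x : Torus d L, g (siteOf L n x) * f x
      = ∑ p : Site d L n, g p * (cell p).indicator f x := by
    intro x
    rw [Finset.sum_eq_single (siteOf L n x)]
    · rw [Set.indicator_of_mem]
      rfl
    · intro b _ hb
      rw [Set.indicator_of_notMem, mul_zero]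
      intro h
      exact hb h.symm
    · intro h; exact absurd (Finset.mem_univ _) h
  simp_rw [h1]
  rw [integral_finsetSum]
  · refine Finset.sum_congr rfl fun p _ => ?_
    rw [integral_const_mul, integral_indicator (measurableSet_cell p)]
  · intro p _
    exact (hf.indicator (measurableSet_cell p)).const_mul _

lemma integral_site {d L n : ℕ} [Fact ((0:ℝ) < L)] (g : Site d L n → ℝ) :
    ∫ x : Torus d L, g (siteOf L n x) = ((2:ℝ) ^ n)⁻¹ ^ d * ∑ p, g p := by
  have := integral_site_mul g (fun _ => (1:ℝ)) (integrable_const _)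
  simp only [mul_one] at this
  rw [this, Finset.mul_sum]
  refine Finset.sum_congr rfl fun p _ => ?_
  rw [setIntegral_const, Measure.real, volume_real_cell]
  simp [mul_comm]

lemma card_site (d L n : ℕ) : (Fintype.card (Site d L n) : ℝ) = ((2:ℝ) ^ n) ^ d * (L:ℝ) ^ d := by
  simp [mul_pow]

lemma volume_torus (d L : ℕ) [Fact ((0:ℝ) < L)] :
    (volume : Measure (Torus d L)).real Set.univ = (L:ℝ) ^ d := by
  rw [Measure.real, ← Set.pi_univ, volume_pi_pi]
  simp

/-- parent of a fine site. -/
def parent {d L : ℕ} (k ℓ : ℕ) (h : ℓ ≤ k) (p : Site d L k) : Site d L ℓ :=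
  fun i => ⟨(p i : ℕ) / 2 ^ (k - ℓ), by
    rw [Nat.div_lt_iff_lt_mul (by positivity)]
    have := (p i).2
    calc (p i : ℕ) < 2 ^ k * L := this
      _ = 2 ^ ℓ * L * 2 ^ (k - ℓ) := by
        rw [mul_right_comm, ← pow_add, Nat.add_sub_cancel' h]⟩

lemma parent_siteOf {d L k ℓ : ℕ} [Fact ((0:ℝ) < L)] (h : ℓ ≤ k) (x : Torus d L) :
    parent k ℓ h (siteOf L k x) = siteOf L ℓ x := by
  funext i
  rw [Fin.ext_iff, siteOf_val]
  have : ((parent k ℓ h (siteOf L k x)) i : ℕ) = (siteOf L k x i : ℕ) / 2 ^ (k - ℓ) := rfl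
  rw [this, siteOf_val]
  have h2 : torusCoord (x i) * 2 ^ ℓ = torusCoord (x i) * 2 ^ k / ((2 ^ (k - ℓ) : ℕ) : ℝ) := by
    push_cast
    rw [eq_div_iff (by positivity), mul_assoc, ← pow_add, Nat.add_sub_cancel' h]
  rw [h2, Nat.floor_div_natCast]

lemma setIntegral_cell_eq {d L ℓ : ℕ} [Fact ((0:ℝ) < L)] (A : Site d L ℓ) (f : Torus d L → ℝ) :
    ∫ x in cell A, f x = ∫ x, if siteOf L ℓ x = A then f x else 0 := by
  rw [← integral_indicator (measurableSet_cell A)]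
  refine integral_congr_ae (Filter.Eventually.of_forall fun x => ?_)
  simp only [Set.indicator, cell, Set.mem_setOf_eq]

lemma setIntegral_cell_site {d L k ℓ : ℕ} [Fact ((0:ℝ) < L)] (h : ℓ ≤ k) (A : Site d L ℓ)
    (g : Site d L k → ℝ) :
    ∫ x in cell A, g (siteOf L k x)
      = ((2:ℝ) ^ k)⁻¹ ^ d * ∑ p with parent k ℓ h p = A, g p := by
  rw [setIntegral_cell_eq]
  simp_rw [← parent_siteOf h]
  rw [integral_site (fun p => if parent k ℓ h p = A then g p else 0), Finset.sum_filter]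

lemma card_fiber {d L k ℓ : ℕ} [Fact ((0:ℝ) < L)] (h : ℓ ≤ k) (A : Site d L ℓ) :
    (Finset.univ.filter fun p : Site d L k => parent k ℓ h p = A).card = 2 ^ (d * (k - ℓ)) := by
  have h1 := setIntegral_cell_site h A (fun _ => (1:ℝ))
  rw [setIntegral_const, Measure.real, volume_real_cell] at h1
  simp only [smul_eq_mul, mul_one, Finset.sum_const, nsmul_eq_mul] at h1
  have hk : (2:ℝ) ^ k = 2 ^ ℓ * 2 ^ (k - ℓ) := by rw [← pow_add, Nat.add_sub_cancel' h]
  have : ((Finset.univ.filter fun p : Site d L k => parent k ℓ h p = A).card : ℝ)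
      = ((2 ^ (d * (k - ℓ)) : ℕ) : ℝ) := by
    push_cast
    rw [hk, mul_inv, mul_pow, mul_assoc] at h1
    have h0 : ((2:ℝ) ^ ℓ)⁻¹ ^ d ≠ 0 := by positivity
    have h2 := mul_left_cancel₀ h0 ((mul_one _).trans h1)
    rw [inv_pow, ← div_eq_inv_mul, eq_div_iff (by positivity), one_mul] at h2
    rw [← h2, ← pow_mul, mul_comm]
  exact_mod_cast this

lemma kac_lipschitz {d : ℕ} {J : ℝ → ℝ} (hJ : KacPotential d J) :
    ∃ K : ℝ, 0 ≤ K ∧ ∀ r s : ℝ, 0 ≤ r → 0 ≤ s → |J r - J s| ≤ K * |r - s| := by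
  have hc : ContDiffOn ℝ 1 J (Set.Icc 0 1) := hJ.smooth.of_le (by exact_mod_cast le_top)
  have hcont : ContinuousOn (derivWithin J (Set.Icc 0 1)) (Set.Icc 0 1) :=
    hc.continuousOn_derivWithin (uniqueDiffOn_Icc zero_lt_one) le_rfl
  obtain ⟨K, hK⟩ := isCompact_Icc.exists_bound_of_continuousOn hcont
  have hK0 : 0 ≤ K := (norm_nonneg _).trans (hK 0 (by simp))
  have hin : ∀ r ∈ Set.Icc (0:ℝ) 1, ∀ s ∈ Set.Icc (0:ℝ) 1, |J r - J s| ≤ K * |r - s| := by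
    intro r hr s hs
    have := (convex_Icc (0:ℝ) 1).norm_image_sub_le_of_norm_derivWithin_le
      (hc.differentiableOn one_ne_zero) hK hs hr
    simpa using this
  have h1 : J 1 = 0 := by
    have hcl : Set.EqOn J (fun _ => 0) (closure (Set.Ioi 1)) := by
      refine Set.EqOn.closure (fun r hr => hJ.support r hr) hJ.continuous continuous_const
    exact hcl (by simp)
  have hsup : ∀ r, 1 ≤ r → J r = 0 := by
    intro r hr
    rcases hr.eq_or_lt with h | h
    · rw [← h, h1]
    · exact hJ.support r h
  have hmix : ∀ r s : ℝ, 0 ≤ r → r ≤ s → |J r - J s| ≤ K * |r - s| := by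
    intro r s hr hrs
    by_cases hs1 : s ≤ 1
    · exact hin r ⟨hr, hrs.trans hs1⟩ s ⟨hr.trans hrs, hs1⟩
    · push Not at hs1
      by_cases hr1 : r ≤ 1
      · have := hin r ⟨hr, hr1⟩ 1 (by simp)
        rw [hsup s hs1.le, ← h1]
        refine this.trans ?_
        gcongr 1
        rw [abs_of_nonpos (by linarith), abs_of_nonpos (by linarith)]
        linarith
      · push Not at hr1
        rw [hsup s hs1.le, hsup r hr1.le]
        simp only [sub_self, abs_zero]
        positivity
  refine ⟨K, hK0, fun r s hr hs => ?_⟩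
  rcases le_total r s with h | h
  · exact hmix r s hr h
  · rw [abs_sub_comm, abs_sub_comm r s]; exact hmix s r hs h

/-- corner of the cell containing `x` -/
noncomputable def corner {d : ℕ} (L n : ℕ) [Fact ((0:ℝ) < L)] (x : Torus d L) : Torus d L :=
  sitePos L n (siteOf L n x)

lemma dist_corner {d L n : ℕ} [Fact ((0:ℝ) < L)] (x : Torus d L) (i : Fin d) :
    dist (x i) (corner L n x i) ≤ ((2:ℝ) ^ n)⁻¹ := by
  have h1 : corner L n x i
      = (((siteOf L n x i : ℕ) * (2:ℝ) ^ (-(n:ℤ)) : ℝ) : AddCircle (L:ℝ)) := rfl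
  rw [h1, siteOf_val]
  set t := torusCoord (x i) with ht
  have ht0 : 0 ≤ t := (torusCoord_mem (x i)).1
  have hx : x i = ((t:ℝ) : AddCircle (L:ℝ)) := (torusCoord_coe (x i)).symm
  rw [hx, dist_eq_norm, ← AddCircle.coe_sub]
  refine (QuotientAddGroup.norm_mk_le_norm).trans ?_
  have hp : (0:ℝ) < 2 ^ n := by positivity
  rw [Real.norm_eq_abs, zpow_neg, zpow_natCast, abs_le]
  have h2 := Nat.floor_le (a := t * 2 ^ n) (by positivity)
  have h3 := Nat.lt_floor_add_one (t * 2 ^ n)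
  have hi : (0:ℝ) < ((2:ℝ) ^ n)⁻¹ := by positivity
  have e : t = (t * 2 ^ n) * ((2:ℝ) ^ n)⁻¹ := by field_simp
  constructor
  · nlinarith
  · have : t - (⌊t * 2 ^ n⌋₊:ℝ) * ((2:ℝ) ^ n)⁻¹
      = (t * 2 ^ n - ⌊t * 2 ^ n⌋₊) * ((2:ℝ) ^ n)⁻¹ := by
      rw [sub_mul, ← e]
    rw [this]
    nlinarith

lemma torusDist_nonneg {d L : ℕ} (x y : Torus d L) : 0 ≤ torusDist x y := Real.sqrt_nonneg _

lemma torusDist_eq {d L : ℕ} (x y : Torus d L) :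
    torusDist x y = ‖(WithLp.toLp 2 (fun i => dist (x i) (y i)) : EuclideanSpace ℝ (Fin d))‖ := by
  rw [EuclideanSpace.norm_eq]
  simp [torusDist]

lemma torusDist_corner {d L n : ℕ} [Fact ((0:ℝ) < L)] (x y : Torus d L) :
    |torusDist x y - torusDist (corner L n x) (corner L n y)|
      ≤ 2 * Real.sqrt d * ((2:ℝ) ^ n)⁻¹ := by
  rw [torusDist_eq, torusDist_eq]
  refine (abs_norm_sub_norm_le _ _).trans ?_
  rw [EuclideanSpace.norm_eq]
  have hi : (0:ℝ) < ((2:ℝ) ^ n)⁻¹ := by positivity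
  have : 2 * Real.sqrt d * ((2:ℝ) ^ n)⁻¹ = Real.sqrt (∑ _i : Fin d, (2 * ((2:ℝ) ^ n)⁻¹) ^ 2) := by
    rw [Finset.sum_const, Finset.card_univ, Fintype.card_fin, nsmul_eq_mul,
      Real.sqrt_mul (by positivity), Real.sqrt_sq (by positivity)]
    ring
  rw [this]
  refine Real.sqrt_le_sqrt (Finset.sum_le_sum fun i _ => ?_)
  refine pow_le_pow_left₀ (norm_nonneg _) ?_ 2
  have h := dist_dist_dist_le (x i) (y i) (corner L n x i) (corner L n y i)
  rw [Real.dist_eq] at h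
  have h1 := dist_corner (n := n) x i
  have h2 := dist_corner (n := n) y i
  calc _ = |dist (x i) (y i) - dist (corner L n x i) (corner L n y i)| := by simp
    _ ≤ _ := by linarith

lemma dist_le_torusDist {d L : ℕ} (x y : Torus d L) : dist y x ≤ torusDist x y := by
  rw [dist_pi_le_iff (torusDist_nonneg _ _)]
  intro i
  rw [dist_comm]
  refine Real.le_sqrt_of_sq_le ?_
  exact Finset.single_le_sum (f := fun i => (dist (x i) (y i)) ^ 2)
    (fun i _ => sq_nonneg _) (Finset.mem_univ i)

lemma continuous_torusDist {d L : ℕ} :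
    Continuous (fun z : Torus d L × Torus d L => torusDist z.1 z.2) := by
  unfold torusDist
  fun_prop

lemma volume_ball_le {d L : ℕ} [Fact ((0:ℝ) < L)] (x : Torus d L) {R : ℝ} (hR : 0 ≤ R) :
    (volume : Measure (Torus d L)).real (Metric.closedBall x R) ≤ (2 * R) ^ d := by
  rw [Measure.real, closedBall_pi _ hR, volume_pi_pi]
  simp_rw [AddCircle.volume_closedBall]
  rw [Finset.prod_const, Finset.card_univ, Fintype.card_fin]
  rw [ENNReal.toReal_pow]
  refine pow_le_pow_left₀ ENNReal.toReal_nonneg ?_ d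
  rw [ENNReal.toReal_ofReal (le_min (by positivity) (by positivity))]
  exact min_le_right _ _

lemma integrable_of_bdd {d L : ℕ} [Fact ((0:ℝ) < L)] {f : Torus d L → ℝ} (hf : Measurable f)
    {M : ℝ} (hM : ∀ x, |f x| ≤ M) : Integrable f :=
  Integrable.of_bound hf.aestronglyMeasurable M (Filter.Eventually.of_forall hM)

lemma double_integral_sub_le {d L : ℕ} [Fact ((0:ℝ) < L)] {G₁ G₂ : Torus d L → Torus d L → ℝ}
    (h₁ : Measurable (Function.uncurry G₁)) (h₂ : Measurable (Function.uncurry G₂))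
    {M b R : ℝ} (hR : 0 ≤ R) (hb : 0 ≤ b)
    (hM₁ : ∀ x y, |G₁ x y| ≤ M) (hM₂ : ∀ x y, |G₂ x y| ≤ M)
    (hd : ∀ x y, |G₁ x y - G₂ x y| ≤ (Metric.closedBall x R).indicator (fun _ => b) y) :
    |(∫ x, ∫ y, G₁ x y) - ∫ x, ∫ y, G₂ x y| ≤ b * (2 * R) ^ d * (L:ℝ) ^ d := by
  have key : ∀ G : Torus d L → Torus d L → ℝ, Measurable (Function.uncurry G) →
      (∀ x y, |G x y| ≤ M) → (∀ x, Integrable (G x)) ∧ Integrable (fun x => ∫ y, G x y) := by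
    intro G hG hGM
    refine ⟨fun x => integrable_of_bdd (hG.comp measurable_prodMk_left) (hGM x), ?_⟩
    have hi : Integrable (Function.uncurry G)
        ((volume : Measure (Torus d L)).prod (volume : Measure (Torus d L))) :=
      Integrable.of_bound hG.aestronglyMeasurable M (Filter.Eventually.of_forall fun z => hGM z.1 z.2)
    exact hi.integral_prod_left
  obtain ⟨i1, i1'⟩ := key G₁ h₁ hM₁
  obtain ⟨i2, i2'⟩ := key G₂ h₂ hM₂
  rw [← integral_sub i1' i2', ← Real.norm_eq_abs]
  have hx : ∀ x : Torus d L, ‖(∫ y, G₁ x y) - ∫ y, G₂ x y‖ ≤ b * (2 * R) ^ d := by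
    intro x
    rw [← integral_sub (i1 x) (i2 x)]
    have hmb : MeasurableSet (Metric.closedBall x R) := Metric.isClosed_closedBall.measurableSet
    refine (norm_integral_le_of_norm_le ((integrable_const b).indicator hmb)
      (Filter.Eventually.of_forall (hd x))).trans ?_
    rw [integral_indicator hmb, setIntegral_const, smul_eq_mul, mul_comm]
    exact mul_le_mul_of_nonneg_left (volume_ball_le x hR) hb
  refine (norm_integral_le_of_norm_le_const (Filter.Eventually.of_forall hx)).trans ?_
  rw [volume_torus]

/-- interaction energy -/
noncomputable def Qi {d L : ℕ} [Fact ((0:ℝ) < L)] (J : ℝ → ℝ) (σ : Torus d L → ℝ) : ℝ :=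
  ∫ x, ∫ y, J (torusDist x y) * σ x * σ y

/-- discretised interaction energy -/
noncomputable def Qn {d L : ℕ} [Fact ((0:ℝ) < L)] (n : ℕ) (J : ℝ → ℝ) (σ : Torus d L → ℝ) : ℝ :=
  ∫ x, ∫ y, J (torusDist (corner L n x) (corner L n y)) * σ x * σ y

lemma measurable_JD {d L : ℕ} {J : ℝ → ℝ} (hJ : Continuous J) [Fact ((0:ℝ) < L)] :
    Measurable (fun z : Torus d L × Torus d L => J (torusDist z.1 z.2)) :=
  (hJ.comp continuous_torusDist).measurable

lemma measurable_JDn {d L n : ℕ} {J : ℝ → ℝ} [Fact ((0:ℝ) < L)] :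
    Measurable (fun z : Torus d L × Torus d L =>
      J (torusDist (corner L n z.1) (corner L n z.2))) := by
  have h : Measurable (fun z : Torus d L × Torus d L => (siteOf L n z.1, siteOf L n z.2)) :=
    (measurable_siteOf.comp measurable_fst).prodMk (measurable_siteOf.comp measurable_snd)
  have hg : Measurable (fun w : Site d L n × Site d L n =>
    J (torusDist (sitePos L n w.1) (sitePos L n w.2))) := measurable_of_countable _
  have := hg.comp h
  simp only [Function.comp_def] at this
  simp only [corner]
  exact this

lemma abs_triple_le {a b c M : ℝ} (ha : |a| ≤ M) (hb : |b| ≤ 1) (hc : |c| ≤ 1) :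
    |a * b * c| ≤ M := by
  rw [abs_mul, abs_mul]
  have hM : 0 ≤ M := (abs_nonneg _).trans ha
  calc |a| * |b| * |c| ≤ M * 1 * 1 := by gcongr
    _ = M := by ring

/-- Comparison of the interaction with its discretisation. -/
lemma Qi_sub_Qn {d : ℕ} {J : ℝ → ℝ} (hJ : KacPotential d J) :
    ∃ C : ℝ, 0 ≤ C ∧ ∀ (L n : ℕ) [Fact ((0:ℝ) < L)] (σ : Torus d L → ℝ), Measurable σ →
      (∀ x, |σ x| ≤ 1) → |Qi J σ - Qn n J σ| ≤ C * ((2:ℝ) ^ n)⁻¹ * (L:ℝ) ^ d := by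
  obtain ⟨K, hK0, hK⟩ := kac_lipschitz hJ
  obtain ⟨M, hM⟩ := hJ.bounded
  set R : ℝ := 1 + 2 * Real.sqrt d with hR
  have hR0 : 0 ≤ R := by positivity
  refine ⟨K * (2 * Real.sqrt d) * (2 * R) ^ d, by positivity, ?_⟩
  intro L n _ σ hσ hσ1
  have hb0 : 0 ≤ K * (2 * Real.sqrt d * ((2:ℝ) ^ n)⁻¹) := by positivity
  have := double_integral_sub_le (R := R) (M := M) (b := K * (2 * Real.sqrt d * ((2:ℝ) ^ n)⁻¹))
    (G₁ := fun x y => J (torusDist x y) * σ x * σ y)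
    (G₂ := fun x y => J (torusDist (corner L n x) (corner L n y)) * σ x * σ y)
    (((measurable_JD hJ.continuous).mul (hσ.comp measurable_fst)).mul (hσ.comp measurable_snd))
    ((measurable_JDn.mul (hσ.comp measurable_fst)).mul (hσ.comp measurable_snd))
    hR0 hb0
    (fun x y => abs_triple_le (hM _) (hσ1 x) (hσ1 y))
    (fun x y => abs_triple_le (hM _) (hσ1 x) (hσ1 y))
    (by
      intro x y
      have hd := torusDist_corner (n := n) x y
      rw [← sub_mul, ← sub_mul]
      by_cases hy : y ∈ Metric.closedBall x R
      · rw [Set.indicator_of_mem hy]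
        refine abs_triple_le ?_ (hσ1 x) (hσ1 y)
        refine (hK _ _ (torusDist_nonneg _ _) (torusDist_nonneg _ _)).trans ?_
        gcongr
      · rw [Set.indicator_of_notMem hy]
        rw [Metric.mem_closedBall, not_le] at hy
        have h1 : R < torusDist x y := hy.trans_le (dist_le_torusDist x y)
        have h2 : 2 * Real.sqrt d * ((2:ℝ) ^ n)⁻¹ ≤ 2 * Real.sqrt d := by
          have : ((2:ℝ) ^ n)⁻¹ ≤ 1 := inv_le_one_of_one_le₀ (one_le_pow₀ (by norm_num))
          have h0 : 0 ≤ 2 * Real.sqrt d := by positivity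
          nlinarith
        have h3 := (abs_le.1 hd).2
        have hs : 0 ≤ Real.sqrt d := Real.sqrt_nonneg _
        rw [hJ.support _ (by linarith), hJ.support _ (by linarith)]
        simp)
  unfold Qi Qn
  refine this.trans (le_of_eq ?_)
  ring

/-- Continuity of the interaction. -/
lemma Qi_sub_Qi {d : ℕ} {J : ℝ → ℝ} (hJ : KacPotential d J) :
    ∃ C : ℝ, 0 ≤ C ∧ ∀ (L : ℕ) [Fact ((0:ℝ) < L)] (σ τ : Torus d L → ℝ) (ε : ℝ), Measurable σ →
      Measurable τ →
      (∀ x, |σ x| ≤ 1) → (∀ x, |τ x| ≤ 1) → 0 ≤ ε → (∀ x, |σ x - τ x| ≤ ε) →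
      |Qi J σ - Qi J τ| ≤ C * ε * (L:ℝ) ^ d := by
  obtain ⟨M, hM⟩ := hJ.bounded
  have hM0 : 0 ≤ M := (abs_nonneg _).trans (hM 0)
  refine ⟨M * 2 * (2 * 1) ^ d, by positivity, ?_⟩
  intro L _ σ τ ε hσ hτ hσ1 hτ1 hε hd
  have := double_integral_sub_le (R := 1) (M := M) (b := M * (2 * ε))
    (G₁ := fun x y => J (torusDist x y) * σ x * σ y)
    (G₂ := fun x y => J (torusDist x y) * τ x * τ y)
    (((measurable_JD hJ.continuous).mul (hσ.comp measurable_fst)).mul (hσ.comp measurable_snd))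
    (((measurable_JD hJ.continuous).mul (hτ.comp measurable_fst)).mul (hτ.comp measurable_snd))
    zero_le_one (by positivity)
    (fun x y => abs_triple_le (hM _) (hσ1 x) (hσ1 y))
    (fun x y => abs_triple_le (hM _) (hτ1 x) (hτ1 y))
    (by
      intro x y
      by_cases hy : y ∈ Metric.closedBall x 1
      · rw [Set.indicator_of_mem hy]
        have e : J (torusDist x y) * σ x * σ y - J (torusDist x y) * τ x * τ y
          = J (torusDist x y) * ((σ x - τ x) * σ y + τ x * (σ y - τ y)) := by ring
        rw [e, abs_mul]
        have : |(σ x - τ x) * σ y + τ x * (σ y - τ y)| ≤ 2 * ε := by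
          refine (abs_add_le _ _).trans ?_
          rw [abs_mul, abs_mul]
          have := hd x
          have := hd y
          have := hσ1 y
          have := hτ1 x
          have a1 : |σ x - τ x| * |σ y| ≤ ε * 1 := by gcongr
          have a2 : |τ x| * |σ y - τ y| ≤ 1 * ε := by gcongr
          linarith
        exact mul_le_mul (hM _) this (abs_nonneg _) hM0
      · rw [Set.indicator_of_notMem hy]
        rw [Metric.mem_closedBall, not_le] at hy
        have h1 : 1 < torusDist x y := hy.trans_le (dist_le_torusDist x y)
        rw [hJ.support _ h1]
        simp)
  unfold Qi
  refine this.trans (le_of_eq ?_)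
  ring

/-- The discretised interaction only depends on the integrals over cells. -/
lemma Qn_eq {d L n : ℕ} [Fact ((0:ℝ) < L)] (J : ℝ → ℝ) (σ : Torus d L → ℝ) (hσ : Integrable σ) :
    Qn n J σ = ∑ p : Site d L n, ∑ q : Site d L n,
      J (torusDist (sitePos L n p) (sitePos L n q)) *
        (∫ x in cell p, σ x) * (∫ x in cell q, σ x) := by
  unfold Qn
  have h1 : ∀ x : Torus d L, ∫ y, J (torusDist (corner L n x) (corner L n y)) * σ x * σ y
      = (∑ q : Site d L n, J (torusDist (sitePos L n (siteOf L n x)) (sitePos L n q))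
          * (∫ y in cell q, σ y)) * σ x := by
    intro x
    rw [← integral_site_mul (fun q => J (torusDist (sitePos L n (siteOf L n x)) (sitePos L n q)))
      σ hσ, mul_comm, ← integral_const_mul]
    refine integral_congr_ae (Filter.Eventually.of_forall fun y => ?_)
    simp only [corner]
    ring
  simp_rw [h1]
  rw [integral_site_mul (fun p => ∑ q : Site d L n, J (torusDist (sitePos L n p) (sitePos L n q))
          * (∫ y in cell q, σ y)) σ hσ]
  refine Finset.sum_congr rfl fun p _ => ?_
  rw [Finset.sum_mul]
  refine Finset.sum_congr rfl fun q _ => ?_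
  ring

lemma log_factorial_lower (n : ℕ) : (n:ℝ) * Real.log n - n ≤ Real.log (n.factorial) := by
  induction n with
  | zero => simp
  | succ n ih =>
    rw [Nat.factorial_succ]
    push_cast
    rw [Real.log_mul (by positivity) (by positivity)]
    rcases Nat.eq_zero_or_pos n with h | h
    · subst h; simp
    · have hn : (0:ℝ) < n := by exact_mod_cast h
      have h1 : Real.log (((n:ℝ) + 1) / n) ≤ ((n:ℝ) + 1) / n - 1 :=
        Real.log_le_sub_one_of_pos (by positivity)
      rw [Real.log_div (by positivity) (by positivity)] at h1
      have h2 : n * (Real.log ((n:ℝ) + 1) - Real.log n) ≤ n * (((n:ℝ) + 1) / n - 1) :=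
        mul_le_mul_of_nonneg_left h1 hn.le
      have h3 : n * (((n:ℝ) + 1) / n - 1) = 1 := by field_simp; ring
      nlinarith

lemma log_factorial_upper (n : ℕ) :
    Real.log (n.factorial) ≤ ((n:ℝ) + 1) * Real.log (n + 1) - n := by
  induction n with
  | zero => simp
  | succ n ih =>
    rw [Nat.factorial_succ]
    push_cast
    rw [Real.log_mul (by positivity) (by positivity)]
    have h1 : Real.log (((n:ℝ) + 1) / (n + 2)) ≤ ((n:ℝ) + 1) / (n + 2) - 1 :=
      Real.log_le_sub_one_of_pos (by positivity)
    rw [Real.log_div (by positivity) (by positivity)] at h1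
    have h2 := mul_le_mul_of_nonneg_left h1 (by positivity : (0:ℝ) ≤ n + 2)
    have h3 : ((n:ℝ) + 2) * (((n:ℝ) + 1) / (n + 2) - 1) = -1 := by field_simp; ring
    have e : (n:ℝ) + 1 + 1 = n + 2 := by ring
    rw [e]
    nlinarith

lemma log_factorial_upper' (n : ℕ) :
    Real.log (n.factorial) ≤ (n:ℝ) * Real.log n - n + (Real.log (n + 1) + 1) := by
  refine (log_factorial_upper n).trans ?_
  rcases Nat.eq_zero_or_pos n with h | h
  · subst h; simp
  · have hn : (0:ℝ) < n := by exact_mod_cast h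
    have h1 : Real.log (((n:ℝ) + 1) / n) ≤ ((n:ℝ) + 1) / n - 1 :=
      Real.log_le_sub_one_of_pos (by positivity)
    rw [Real.log_div (by positivity) (by positivity)] at h1
    have h2 : n * (Real.log ((n:ℝ) + 1) - Real.log n) ≤ n * (((n:ℝ) + 1) / n - 1) :=
      mul_le_mul_of_nonneg_left h1 hn.le
    have h3 : n * (((n:ℝ) + 1) / n - 1) = 1 := by field_simp; ring
    nlinarith

lemma ient_frac (n j : ℕ) (hn : 0 < n) (hj : j ≤ n) :
    n * ient (2 * (j:ℝ) / n - 1)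
      = j * Real.log j + ((n - j : ℕ) : ℝ) * Real.log ((n - j : ℕ) : ℝ) - n * Real.log n := by
  have hn' : (0:ℝ) < n := by exact_mod_cast hn
  unfold ient
  have e1 : (1 - (2 * (j:ℝ) / n - 1)) / 2 = ((n - j : ℕ) : ℝ) / n := by
    rw [Nat.cast_sub hj]; field_simp; ring
  have e2 : (1 + (2 * (j:ℝ) / n - 1)) / 2 = (j:ℝ) / n := by
    field_simp; ring
  rw [e1, e2]
  have key : ∀ i : ℕ, (n:ℝ) * ((i:ℝ) / n * Real.log ((i:ℝ) / n))
      = i * Real.log i - i * Real.log n := by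
    intro i
    rcases Nat.eq_zero_or_pos i with h | h
    · subst h; simp
    · have hi : (0:ℝ) < i := by exact_mod_cast h
      rw [Real.log_div hi.ne' hn'.ne']
      field_simp
  rw [mul_add, key, key, Nat.cast_sub hj]
  ring

lemma log_choose_bound (n j : ℕ) (hn : 0 < n) (hj : j ≤ n) :
    |Real.log (n.choose j) + n * ient (2 * (j:ℝ) / n - 1)| ≤ 2 * (Real.log (n + 1) + 1) := by
  rw [ient_frac n j hn hj, Nat.choose_eq_factorial_div_factorial hj,
    Nat.cast_div (Nat.factorial_mul_factorial_dvd_factorial hj) (by positivity)]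
  push_cast
  rw [Real.log_div (by positivity) (by positivity), Real.log_mul (by positivity) (by positivity)]
  have a1 := log_factorial_lower n
  have a2 := log_factorial_upper' n
  have b1 := log_factorial_lower j
  have b2 := log_factorial_upper' j
  have c1 := log_factorial_lower (n - j)
  have c2 := log_factorial_upper' (n - j)
  have hjn : Real.log ((j:ℝ) + 1) ≤ Real.log ((n:ℝ) + 1) := by
    apply Real.log_le_log (by positivity)
    have : (j:ℝ) ≤ n := by exact_mod_cast hj
    linarith
  have hjn' : Real.log (((n - j : ℕ):ℝ) + 1) ≤ Real.log ((n:ℝ) + 1) := by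
    apply Real.log_le_log (by positivity)
    have : ((n - j : ℕ):ℝ) ≤ n := by exact_mod_cast Nat.sub_le _ _
    linarith
  have hs : ((n - j : ℕ):ℝ) = n - j := Nat.cast_sub hj
  have hl : 0 ≤ Real.log ((n:ℝ) + 1) := Real.log_nonneg (by linarith [(Nat.cast_nonneg n : (0:ℝ) ≤ n)])
  rw [abs_le]
  constructor <;> linarith

lemma mul_log_diff (n : ℕ) (hn : 0 < n) (q h : ℝ) (hq : 0 ≤ q) (hh : 0 ≤ h) (hqh : q + h ≤ 1)
    (hhn : h ≤ 1 / n) :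
    n * |(q + h) * Real.log (q + h) - q * Real.log q| ≤ Real.log n + 1 := by
  have hn' : (1:ℝ) ≤ n := by exact_mod_cast hn
  have hln : 0 ≤ Real.log n := Real.log_nonneg hn'
  rcases hh.eq_or_lt with h0 | h0
  · subst h0; simp; linarith
  have hnh : n * h ≤ 1 := by
    rw [le_div_iff₀ (by linarith)] at hhn; linarith
  have hup : (q + h) * Real.log (q + h) - q * Real.log q ≤ h := by
    rcases hq.eq_or_lt with q0 | q0
    · subst q0
      simp only [zero_add, zero_mul, sub_zero]
      have : Real.log h ≤ 0 := Real.log_nonpos hh (by linarith)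
      nlinarith
    · have h1 : Real.log ((q + h) / q) ≤ (q + h) / q - 1 :=
        Real.log_le_sub_one_of_pos (by positivity)
      rw [Real.log_div (by positivity) (by positivity)] at h1
      have h2 := mul_le_mul_of_nonneg_left h1 hq
      have h3 : q * ((q + h) / q - 1) = h := by field_simp; ring
      have h4 : Real.log (q + h) ≤ 0 := Real.log_nonpos (by linarith) hqh
      nlinarith
  have hlo : h * Real.log h ≤ (q + h) * Real.log (q + h) - q * Real.log q := by
    have h1 : Real.log h ≤ Real.log (q + h) := Real.log_le_log h0 (by linarith)
    have h2 : q * Real.log q ≤ q * Real.log (q + h) := by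
      rcases hq.eq_or_lt with q0 | q0
      · subst q0; simp
      · exact mul_le_mul_of_nonneg_left (Real.log_le_log q0 (by linarith)) hq
    nlinarith
  have hlo2 : -(Real.log n + 1) ≤ n * (h * Real.log h) := by
    have hpos : 0 < n * h := by positivity
    have e : Real.log h = Real.log (n * h) - Real.log n := by
      rw [Real.log_mul (by positivity) h0.ne']; ring
    have h5 := Real.one_sub_inv_le_log_of_pos hpos
    have h6 : (n * h) * (1 - (n * h)⁻¹) ≤ (n * h) * Real.log (n * h) :=
      mul_le_mul_of_nonneg_left h5 hpos.le
    have h7 : (n * h) * (1 - (n * h)⁻¹) = n * h - 1 := by field_simp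
    rw [e]
    nlinarith
  have : |(q + h) * Real.log (q + h) - q * Real.log q| * n ≤ Real.log n + 1 := by
    rw [← abs_of_nonneg (by linarith : (0:ℝ) ≤ n), ← abs_mul, abs_of_nonneg (by linarith : (0:ℝ) ≤ n),
      abs_le]
    constructor <;> nlinarith
  linarith

lemma mul_log_diff' (n : ℕ) (hn : 0 < n) (p q : ℝ) (hq : 0 ≤ q) (hp : 0 ≤ p) (hp1 : p ≤ 1)
    (hq1 : q ≤ 1) (hhn : |p - q| ≤ 1 / n) :
    n * |p * Real.log p - q * Real.log q| ≤ Real.log n + 1 := by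
  rcases le_total q p with h | h
  · have := mul_log_diff n hn q (p - q) hq (by linarith) (by linarith) ((le_abs_self _).trans hhn)
    simpa using this
  · have := mul_log_diff n hn p (q - p) hp (by linarith) (by linarith)
      (by rw [abs_sub_comm] at hhn; exact (le_abs_self _).trans hhn)
    rw [abs_sub_comm]
    simpa using this

lemma ient_diff (n : ℕ) (hn : 0 < n) (a b : ℝ) (ha : a ∈ Set.Icc (-1:ℝ) 1)
    (hb : b ∈ Set.Icc (-1:ℝ) 1) (hab : |a - b| ≤ 2 / n) :
    n * |ient a - ient b| ≤ 2 * (Real.log n + 1) := by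
  obtain ⟨ha1, ha2⟩ := ha
  obtain ⟨hb1, hb2⟩ := hb
  have hn' : (0:ℝ) < n := by exact_mod_cast hn
  have h1 := mul_log_diff' n hn ((1 - a) / 2) ((1 - b) / 2) (by linarith) (by linarith)
    (by linarith) (by linarith) (by
      rw [show (1 - a) / 2 - (1 - b) / 2 = -((a - b) / 2) by ring, abs_neg, abs_div, abs_two]
      rw [div_le_iff₀ two_pos]; refine hab.trans (le_of_eq (by ring)))
  have h2 := mul_log_diff' n hn ((1 + a) / 2) ((1 + b) / 2) (by linarith) (by linarith)
    (by linarith) (by linarith) (by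
      rw [show (1 + a) / 2 - (1 + b) / 2 = ((a - b) / 2) by ring, abs_div, abs_two]
      rw [div_le_iff₀ two_pos]; refine hab.trans (le_of_eq (by ring)))
  unfold ient
  have h3 := abs_add_le ((1 - a) / 2 * Real.log ((1 - a) / 2) - (1 - b) / 2 * Real.log ((1 - b) / 2))
    ((1 + a) / 2 * Real.log ((1 + a) / 2) - (1 + b) / 2 * Real.log ((1 + b) / 2))
  have h4 := mul_le_mul_of_nonneg_left h3 hn'.le
  rw [show (1 - a) / 2 * Real.log ((1 - a) / 2) + (1 + a) / 2 * Real.log ((1 + a) / 2) -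
    ((1 - b) / 2 * Real.log ((1 - b) / 2) + (1 + b) / 2 * Real.log ((1 + b) / 2)) =
    ((1 - a) / 2 * Real.log ((1 - a) / 2) - (1 - b) / 2 * Real.log ((1 - b) / 2)) +
    ((1 + a) / 2 * Real.log ((1 + a) / 2) - (1 + b) / 2 * Real.log ((1 + b) / 2)) by ring]
  refine h4.trans ?_
  rw [mul_add]
  linarith

lemma continuous_ient : Continuous ient := by
  have h := Real.continuous_mul_log
  unfold ient
  exact (h.comp (by fun_prop : Continuous fun m : ℝ => (1 - m) / 2)).add
    (h.comp (by fun_prop : Continuous fun m : ℝ => (1 + m) / 2))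

lemma convexOn_ient : ConvexOn ℝ (Set.Icc (-1:ℝ) 1) ient := by
  have h := Real.convexOn_mul_log
  refine ⟨convex_Icc _ _, fun x hx y hy a b ha hb hab => ?_⟩
  have h1 := h.2 (x := (1 - x) / 2) (by simp; linarith [hx.2]) (y := (1 - y) / 2)
    (by simp; linarith [hy.2]) ha hb hab
  have h2 := h.2 (x := (1 + x) / 2) (by simp; linarith [hx.1]) (y := (1 + y) / 2)
    (by simp; linarith [hy.1]) ha hb hab
  simp only [smul_eq_mul] at h1 h2 ⊢
  unfold ient
  have e1 : (1 - (a * x + b * y)) / 2 = a * ((1 - x) / 2) + b * ((1 - y) / 2) := by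
    linear_combination (-1/2) * hab
  have e2 : (1 + (a * x + b * y)) / 2 = a * ((1 + x) / 2) + b * ((1 + y) / 2) := by
    linear_combination (-1/2) * hab
  rw [e1, e2]
  linarith

lemma exists_rounding {ι : Type*} [DecidableEq ι] (T : Finset ι) (x : ι → ℝ) (n : ℕ)
    (h0 : ∀ i, 0 ≤ x i) (h1 : ∀ i, x i ≤ n) :
    ∃ a : ι → ℕ, (∀ i, a i ≤ n) ∧ (∀ i, |(a i : ℝ) - x i| ≤ 1) ∧
      ∑ i ∈ T, a i = ⌊∑ i ∈ T, x i⌋₊ := by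
  induction T using Finset.induction_on with
  | empty =>
    refine ⟨fun i => ⌊x i⌋₊, fun i => ?_, fun i => ?_, by simp⟩
    · exact Nat.floor_le_of_le (h1 i)
    · rw [abs_le]
      have := Nat.floor_le (h0 i)
      have := Nat.lt_floor_add_one (x i)
      constructor <;> linarith
  | insert i T hi ih =>
    obtain ⟨a, ha, hax, hs⟩ := ih
    set S := ∑ i ∈ T, x i with hS
    have hS0 : 0 ≤ S := Finset.sum_nonneg fun i _ => h0 i
    have hle : ⌊S⌋₊ ≤ ⌊x i + S⌋₊ := Nat.floor_mono (by linarith [h0 i])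
    have f1 := Nat.floor_le hS0
    have f2 := Nat.lt_floor_add_one S
    have f3 := Nat.floor_le (add_nonneg (h0 i) hS0)
    have f4 := Nat.lt_floor_add_one (x i + S)
    have hub : ⌊x i + S⌋₊ ≤ ⌊S⌋₊ + n := by
      have : ⌊x i + S⌋₊ ≤ ⌊S + (n:ℝ)⌋₊ := Nat.floor_mono (by linarith [h1 i])
      rwa [Nat.floor_add_natCast hS0] at this
    refine ⟨Function.update a i (⌊x i + S⌋₊ - ⌊S⌋₊), fun j => ?_, fun j => ?_, ?_⟩
    · by_cases hj : j = i
      · subst hj; simp; omega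
      · simp [hj, ha j]
    · by_cases hj : j = i
      · subst hj
        rw [Function.update_self, Nat.cast_sub hle, abs_le]
        constructor <;> linarith
      · simp only [Function.update_of_ne hj]; exact hax j
    · rw [Finset.sum_insert hi, Finset.sum_insert hi, Function.update_self, ← hS]
      rw [Finset.sum_congr rfl (g := a), hs]
      · omega
      · intro j hj
        rw [Function.update_of_ne]
        rintro rfl
        exact hi hj

/-- number of occupied sites in a fiber -/
def occ {P B : Type*} [Fintype P] [DecidableEq B] (prt : P → B) (s : P → Bool) (A : B) : ℕ :=
  (Finset.univ.filter fun p => prt p = A ∧ s p = true).card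

lemma card_occ {P B : Type*} [Fintype P] [Fintype B] [DecidableEq P] [DecidableEq B]
    (prt : P → B) (n : ℕ)
    (hn : ∀ A, (Finset.univ.filter fun p => prt p = A).card = n) (a : B → ℕ) :
    (Finset.univ.filter fun s : P → Bool => ∀ A, occ prt s A = a A).card
      = ∏ A, n.choose (a A) := by
  have : ∏ A, n.choose (a A) = (Fintype.piFinset fun A : B =>
      Finset.powersetCard (a A) (Finset.univ.filter fun p => prt p = A)).card := by
    rw [Fintype.card_piFinset]
    simp_rw [Finset.card_powersetCard, hn]
  rw [this]
  refine Finset.card_bij' (fun s _ A => Finset.univ.filter fun p => prt p = A ∧ s p = true)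
    (fun t _ p => decide (p ∈ t (prt p))) ?_ ?_ ?_ ?_
  · intro s hs
    simp only [Finset.mem_filter, Finset.mem_univ, true_and] at hs
    rw [Fintype.mem_piFinset]
    intro A
    rw [Finset.mem_powersetCard]
    refine ⟨?_, hs A⟩
    intro p
    simp only [Finset.mem_filter, Finset.mem_univ, true_and]
    exact fun h => h.1
  · intro t ht
    rw [Fintype.mem_piFinset] at ht
    refine Finset.mem_filter.2 ⟨Finset.mem_univ _, fun A => ?_⟩
    unfold occ
    obtain ⟨h1, h2⟩ := Finset.mem_powersetCard.1 (ht A)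
    rw [← h2]
    congr 1
    ext p
    simp only [Finset.mem_filter, Finset.mem_univ, true_and, decide_eq_true_eq]
    constructor
    · rintro ⟨h, h'⟩; rw [← h]; exact h'
    · intro h
      have := h1 h
      simp only [Finset.mem_filter, Finset.mem_univ, true_and] at this
      exact ⟨this, by rw [this]; exact h⟩
  · intro s hs
    funext p
    simp
  · intro t ht
    rw [Fintype.mem_piFinset] at ht
    funext A
    obtain ⟨h1, h2⟩ := Finset.mem_powersetCard.1 (ht A)
    ext p
    simp only [Finset.mem_filter, Finset.mem_univ, true_and, decide_eq_true_eq]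
    constructor
    · rintro ⟨h, h'⟩; rw [← h]; exact h'
    · intro h
      have := h1 h
      simp only [Finset.mem_filter, Finset.mem_univ, true_and] at this
      exact ⟨this, by rw [this]; exact h⟩

lemma spin_sum {P : Type*} (T : Finset P) (s : P → Bool) :
    ∑ p ∈ T, spin (s p) = 2 * ((T.filter fun p => s p = true).card : ℝ) - T.card := by
  have h : ∀ p ∈ T, spin (s p) = 2 * (if s p = true then (1:ℝ) else 0) - 1 := by
    intro p _
    unfold spin
    split_ifs <;> norm_num
  rw [Finset.sum_congr rfl h, Finset.sum_sub_distrib, ← Finset.mul_sum, Finset.sum_boole]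
  simp

lemma pow_split {d k ℓ : ℕ} (h : ℓ ≤ k) :
    ((2:ℝ) ^ k) ^ d = ((2:ℝ) ^ ℓ) ^ d * ((2 ^ (d * (k - ℓ)) : ℕ) : ℝ) := by
  push_cast
  rw [← pow_mul, ← pow_mul, ← pow_add]
  congr 1
  rw [mul_comm d, ← add_mul, Nat.add_sub_cancel' h]

/-- value of the coarse grained profile on a coarse cell -/
noncomputable def prof {d L k ℓ : ℕ} (h : ℓ ≤ k) (s : ConfigSpace d L k) (A : Site d L ℓ) : ℝ :=
  2 * (occ (parent k ℓ h) s A : ℝ) / ((2 ^ (d * (k - ℓ)) : ℕ) : ℝ) - 1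

section
variable {d L k ℓ : ℕ} [Fact ((0:ℝ) < L)]

lemma stepFun_abs (s : ConfigSpace d L k) (x : Torus d L) : |stepFun L k s x| ≤ 1 := by
  unfold stepFun spin
  split_ifs <;> simp

lemma measurable_stepFun (s : ConfigSpace d L k) : Measurable (stepFun L k s) :=
  measurable_comp_siteOf (fun p => spin (s p))

lemma occ_le (h : ℓ ≤ k) (s : ConfigSpace d L k) (A : Site d L ℓ) :
    occ (parent k ℓ h) s A ≤ 2 ^ (d * (k - ℓ)) := by
  rw [← card_fiber h A]
  refine Finset.card_le_card fun p => ?_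
  simp only [Finset.mem_filter, Finset.mem_univ, true_and]
  exact fun h => h.1

lemma setIntegral_stepFun (h : ℓ ≤ k) (s : ConfigSpace d L k) (A : Site d L ℓ) :
    ∫ x in cell A, stepFun L k s x = ((2:ℝ) ^ ℓ)⁻¹ ^ d * prof h s A := by
  unfold stepFun
  rw [setIntegral_cell_site h A (fun p => spin (s p)), spin_sum, card_fiber h A]
  rw [Finset.filter_filter]
  have hn : (0:ℝ) < ((2 ^ (d * (k - ℓ)) : ℕ) : ℝ) := by positivity
  rw [inv_pow, inv_pow, pow_split h]
  unfold prof occ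
  have h2 : (0:ℝ) < ((2:ℝ) ^ ℓ) ^ d := by positivity
  field_simp

lemma coarse_apply (h : ℓ ≤ k) (s : ConfigSpace d L k) (x : Torus d L) :
    coarse L ℓ (stepFun L k s) x = prof h s (siteOf L ℓ x) := by
  unfold coarse
  rw [cubeOf_eq, setIntegral_stepFun h, volume_real_cell]
  have : ((2:ℝ) ^ ℓ)⁻¹ ^ d ≠ 0 := by positivity
  field_simp

lemma coarse_eq (h : ℓ ≤ k) (s : ConfigSpace d L k) :
    coarse L ℓ (stepFun L k s) = fun x => prof h s (siteOf L ℓ x) :=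
  funext (coarse_apply h s)

lemma siteOf_surj (A : Site d L ℓ) : ∃ x : Torus d L, siteOf L ℓ x = A := by
  by_contra hne
  push Not at hne
  have : cell A = ∅ := by
    ext x
    simp only [cell, Set.mem_empty_iff_false, iff_false]
    exact hne x
  have h2 := volume_real_cell A
  rw [this] at h2
  simp only [measure_empty, ENNReal.toReal_zero] at h2
  have : (0:ℝ) < ((2:ℝ) ^ ℓ)⁻¹ ^ d := by positivity
  linarith

lemma prof_inj (h : ℓ ≤ k) (s t : ConfigSpace d L k) (A : Site d L ℓ) :
    prof h s A = prof h t A ↔ occ (parent k ℓ h) s A = occ (parent k ℓ h) t A := by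
  unfold prof
  have hn : (0:ℝ) < ((2 ^ (d * (k - ℓ)) : ℕ) : ℝ) := by positivity
  constructor
  · intro h
    have h1 := sub_left_injective h
    rw [div_left_inj' hn.ne'] at h1
    have := mul_left_cancel₀ two_ne_zero h1
    exact_mod_cast this
  · intro h; rw [h]

lemma coarse_eq_iff (h : ℓ ≤ k) (s t : ConfigSpace d L k) :
    coarse L ℓ (stepFun L k s) = coarse L ℓ (stepFun L k t) ↔
      ∀ A, occ (parent k ℓ h) s A = occ (parent k ℓ h) t A := by
  rw [coarse_eq h, coarse_eq h]
  constructor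
  · intro he A
    obtain ⟨x, hx⟩ := siteOf_surj (L := L) A
    have := congrFun he x
    simp only [hx] at this
    exact (prof_inj h s t A).1 this
  · intro he
    funext x
    exact (prof_inj h s t _).2 (he _)

lemma prof_mem (h : ℓ ≤ k) (s : ConfigSpace d L k) (A : Site d L ℓ) :
    prof h s A ∈ Set.Icc (-1:ℝ) 1 := by
  have hn : (0:ℝ) < ((2 ^ (d * (k - ℓ)) : ℕ) : ℝ) := by positivity
  have ho : (occ (parent k ℓ h) s A : ℝ) ≤ ((2 ^ (d * (k - ℓ)) : ℕ) : ℝ) := by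
    exact_mod_cast occ_le h s A
  unfold prof
  constructor
  · have : (0:ℝ) ≤ 2 * (occ (parent k ℓ h) s A : ℝ) / ((2 ^ (d * (k - ℓ)) : ℕ) : ℝ) := by positivity
    linarith
  · have : 2 * (occ (parent k ℓ h) s A : ℝ) / ((2 ^ (d * (k - ℓ)) : ℕ) : ℝ) ≤ 2 := by
      rw [div_le_iff₀ hn]; linarith
    linarith

lemma setIntegral_cell_const (u : Site d L ℓ → ℝ) (A : Site d L ℓ) :
    ∫ x in cell A, u (siteOf L ℓ x) = ((2:ℝ) ^ ℓ)⁻¹ ^ d * u A := by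
  have : ∫ x in cell A, u (siteOf L ℓ x) = ∫ x in cell A, u A := by
    refine setIntegral_congr_fun (measurableSet_cell A) fun x hx => ?_
    have hx' : siteOf L ℓ x = A := hx
    simp only [hx']
  rw [this, setIntegral_const, Measure.real, volume_real_cell, smul_eq_mul]

lemma integrable_site (u : Site d L ℓ → ℝ) : Integrable (fun x : Torus d L => u (siteOf L ℓ x)) := by
  refine integrable_of_bdd (measurable_comp_siteOf u) (M := ∑ A, |u A|) fun x => ?_
  exact Finset.single_le_sum (f := fun A => |u A|) (fun A _ => abs_nonneg _) (Finset.mem_univ _)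

/-- The discretised interaction sees only cell averages -/
lemma Qn_avg (J : ℝ → ℝ) (σ : Torus d L → ℝ) (hσ : Integrable σ) (u : Site d L ℓ → ℝ)
    (hu : ∀ A, ∫ x in cell A, σ x = ((2:ℝ) ^ ℓ)⁻¹ ^ d * u A) :
    Qn ℓ J σ = Qn ℓ J (fun x : Torus d L => u (siteOf L ℓ x)) := by
  rw [Qn_eq J σ hσ, Qn_eq J _ (integrable_site u)]
  simp_rw [setIntegral_cell_const, hu]

lemma Ham_eq (J : ℝ → ℝ) (s : ConfigSpace d L k) :
    Ham L k J s = -(((2:ℝ) ^ k) ^ d / 2) * Qn k J (stepFun L k s) := by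
  unfold Ham
  have h1 : Qn k J (stepFun L k s) = Qn k J (fun x : Torus d L => spin (s (siteOf L k x))) := rfl
  rw [h1, Qn_eq J _ (integrable_site fun p => spin (s p))]
  simp_rw [setIntegral_cell_const (fun p => spin (s p))]
  have h2 : ((gam k) ^ d : ℝ) = ((2:ℝ) ^ k)⁻¹ ^ d := by
    unfold gam
    rw [zpow_neg, zpow_natCast]
  rw [h2]
  have h3 : ∀ p q : Site d L k, J (torusDist (sitePos L k p) (sitePos L k q)) *
      (((2:ℝ) ^ k)⁻¹ ^ d * spin (s p)) * (((2:ℝ) ^ k)⁻¹ ^ d * spin (s q))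
      = (((2:ℝ) ^ k)⁻¹ ^ d * ((2:ℝ) ^ k)⁻¹ ^ d) *
        (J (torusDist (sitePos L k p) (sitePos L k q)) * spin (s p) * spin (s q)) := by
    intro p q; ring
  simp_rw [h3, ← Finset.mul_sum]
  rw [inv_pow]
  have : ((2:ℝ) ^ k) ^ d ≠ 0 := by positivity
  field_simp

lemma sum_occ (h : ℓ ≤ k) (s : ConfigSpace d L k) :
    ∑ A, occ (parent k ℓ h) s A = numOnes L k s := by
  unfold numOnes
  rw [Finset.card_eq_sum_card_fiberwise (f := parent k ℓ h) (t := Finset.univ) (by simp)]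
  refine Finset.sum_congr rfl fun A _ => ?_
  unfold occ
  rw [Finset.filter_filter]
  congr 1
  ext p
  simp [and_comm]

lemma integral_coarse (h : ℓ ≤ k) (s : ConfigSpace d L k) :
    (L:ℝ) ^ (-(d:ℤ)) * ∫ r, coarse L ℓ (stepFun L k s) r
      = 2 * (numOnes L k s : ℝ) / (2 ^ (d * k) * (L:ℝ) ^ d) - 1 := by
  rw [coarse_eq h, integral_site, ← sum_occ h s]
  unfold prof
  rw [Finset.sum_sub_distrib, ← Finset.sum_div, ← Finset.mul_sum]
  rw [Finset.sum_const, Finset.card_univ, nsmul_eq_mul, card_site]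
  have hL : (0:ℝ) < L := Fact.out
  have e : (2:ℝ) ^ (d * k) = ((2:ℝ) ^ ℓ) ^ d * ((2 ^ (d * (k - ℓ)) : ℕ) : ℝ) := by
    rw [← pow_split h, ← pow_mul, mul_comm]
  rw [e]
  have hn : (0:ℝ) < ((2 ^ (d * (k - ℓ)) : ℕ) : ℝ) := by positivity
  have h2 : (0:ℝ) < ((2:ℝ) ^ ℓ) ^ d := by positivity
  rw [zpow_neg, zpow_natCast, inv_pow, Nat.cast_sum]
  field_simp

lemma numOnes_eq_iff (h : ℓ ≤ k) (s : ConfigSpace d L k) (Np : ℕ) (m : ℝ)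
    (hm : m = 2 * (Np:ℝ) / (2 ^ (d * k) * (L:ℝ) ^ d) - 1) :
    ((L:ℝ) ^ (-(d:ℤ)) * ∫ r, coarse L ℓ (stepFun L k s) r) = m ↔ numOnes L k s = Np := by
  rw [integral_coarse h, hm]
  have hL : (0:ℝ) < L := Fact.out
  have h2 : (0:ℝ) < 2 ^ (d * k) * (L:ℝ) ^ d := by positivity
  constructor
  · intro h
    have h1 := sub_left_injective h
    rw [div_left_inj' h2.ne'] at h1
    have := mul_left_cancel₀ two_ne_zero h1
    exact_mod_cast this
  · intro h; rw [h]

lemma coarse_measurable (h : ℓ ≤ k) (s : ConfigSpace d L k) :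
    Measurable (coarse L ℓ (stepFun L k s)) := by
  rw [coarse_eq h]; exact measurable_comp_siteOf _

lemma coarse_abs (h : ℓ ≤ k) (s : ConfigSpace d L k) (x : Torus d L) :
    |coarse L ℓ (stepFun L k s) x| ≤ 1 := by
  rw [coarse_apply h]; exact abs_le.2 (prof_mem h s _)

/-- energy estimate -/
lemma Ham_bound {J : ℝ → ℝ} {β C : ℝ} (hβ : 0 ≤ β) (hC0 : 0 ≤ C)
    (hC : ∀ (L n : ℕ) [Fact ((0:ℝ) < L)] (σ : Torus d L → ℝ), Measurable σ →
      (∀ x, |σ x| ≤ 1) → |Qi J σ - Qn n J σ| ≤ C * ((2:ℝ) ^ n)⁻¹ * (L:ℝ) ^ d)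
    (h : ℓ ≤ k) (s : ConfigSpace d L k) :
    |-β * Ham L k J s - β * ((2:ℝ) ^ k) ^ d / 2 * Qi J (coarse L ℓ (stepFun L k s))|
      ≤ β * ((2:ℝ) ^ k) ^ d / 2 * (3 * (C * ((2:ℝ) ^ ℓ)⁻¹ * (L:ℝ) ^ d)) := by
  rw [Ham_eq]
  have h1 := hC L k (stepFun L k s) (measurable_stepFun s) (stepFun_abs s)
  have h2 := hC L ℓ (stepFun L k s) (measurable_stepFun s) (stepFun_abs s)
  have h3 := hC L ℓ _ (coarse_measurable h s) (coarse_abs h s)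
  have h4 : Qn ℓ J (stepFun L k s) = Qn ℓ J (coarse L ℓ (stepFun L k s)) := by
    rw [coarse_eq h]
    exact Qn_avg J _ (integrable_of_bdd (measurable_stepFun s) (stepFun_abs s)) _
      (setIntegral_stepFun h s)
  have hk : C * ((2:ℝ) ^ k)⁻¹ * (L:ℝ) ^ d ≤ C * ((2:ℝ) ^ ℓ)⁻¹ * (L:ℝ) ^ d := by
    gcongr
    norm_num
  have e : -β * (-(((2:ℝ) ^ k) ^ d / 2) * Qn k J (stepFun L k s))
      - β * ((2:ℝ) ^ k) ^ d / 2 * Qi J (coarse L ℓ (stepFun L k s))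
      = β * ((2:ℝ) ^ k) ^ d / 2 * (Qn k J (stepFun L k s) - Qi J (coarse L ℓ (stepFun L k s))) := by
    ring
  rw [e, abs_mul, abs_of_nonneg (by positivity : 0 ≤ β * ((2:ℝ) ^ k) ^ d / 2)]
  refine mul_le_mul_of_nonneg_left ?_ (by positivity)
  rw [← h4] at h3
  rw [abs_le] at *
  constructor <;> linarith [h1.1, h1.2, h2.1, h2.2, h3.1, h3.2]

lemma integral_ient_site (h : ℓ ≤ k) (u : Site d L ℓ → ℝ) :
    ((2:ℝ) ^ k) ^ d * ∫ x : Torus d L, ient (u (siteOf L ℓ x))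
      = ∑ A, ((2 ^ (d * (k - ℓ)) : ℕ) : ℝ) * ient (u A) := by
  rw [integral_site (fun A => ient (u A)), pow_split h, ← Finset.mul_sum, inv_pow]
  have h2 : (0:ℝ) < ((2:ℝ) ^ ℓ) ^ d := by positivity
  field_simp

/-- configurations with a given coarse profile -/
noncomputable def Eset (h : ℓ ≤ k) (s₀ : ConfigSpace d L k) : Finset (ConfigSpace d L k) :=
  Finset.univ.filter fun s => ∀ A, occ (parent k ℓ h) s A = occ (parent k ℓ h) s₀ A

lemma log_card_bound (h : ℓ ≤ k) (s₀ : ConfigSpace d L k) :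
    |Real.log ((Eset h s₀).card) + ((2:ℝ) ^ k) ^ d * ∫ x, ient (coarse L ℓ (stepFun L k s₀) x)|
      ≤ ((2:ℝ) ^ ℓ) ^ d * (L:ℝ) ^ d *
        (2 * (Real.log (((2 ^ (d * (k - ℓ)) : ℕ) : ℝ) + 1) + 1)) := by
  have hc : (Eset h s₀).card = ∏ A, (2 ^ (d * (k - ℓ))).choose (occ (parent k ℓ h) s₀ A) := by
    rw [← card_occ (parent k ℓ h) _ (card_fiber h) (fun A => occ (parent k ℓ h) s₀ A)]
    rfl
  rw [hc, coarse_eq h, integral_ient_site h]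
  push_cast
  rw [Real.log_prod (fun A _ => by
    have := Nat.choose_pos (occ_le h s₀ A)
    positivity), ← Finset.sum_add_distrib]
  refine (Finset.abs_sum_le_sum_abs _ _).trans ?_
  rw [← card_site, ← nsmul_eq_mul]
  refine Finset.sum_le_card_nsmul _ _ _ fun A _ => ?_
  have := log_choose_bound (2 ^ (d * (k - ℓ))) _ (by positivity) (occ_le h s₀ A)
  push_cast at this
  unfold prof
  push_cast
  exact this

lemma GPL_mul {β : ℝ} (hβ : β ≠ 0) (J : ℝ → ℝ) (X : ℝ) (σ : Torus d L → ℝ) :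
    β * X * GPL d L β J σ = X * (∫ x, ient (σ x)) - β * X / 2 * Qi J σ := by
  unfold GPL Qi
  field_simp

lemma log_sum_bound {J : ℝ → ℝ} {β C : ℝ} (hβ : 0 < β) (hC0 : 0 ≤ C)
    (hC : ∀ (L n : ℕ) [Fact ((0:ℝ) < L)] (σ : Torus d L → ℝ), Measurable σ →
      (∀ x, |σ x| ≤ 1) → |Qi J σ - Qn n J σ| ≤ C * ((2:ℝ) ^ n)⁻¹ * (L:ℝ) ^ d)
    (h : ℓ ≤ k) (s₀ : ConfigSpace d L k) :
    |Real.log (∑ s ∈ Eset h s₀, Real.exp (-β * Ham L k J s))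
        + β * ((2:ℝ) ^ k) ^ d * GPL d L β J (coarse L ℓ (stepFun L k s₀))|
      ≤ β * ((2:ℝ) ^ k) ^ d / 2 * (3 * (C * ((2:ℝ) ^ ℓ)⁻¹ * (L:ℝ) ^ d)) +
        ((2:ℝ) ^ ℓ) ^ d * (L:ℝ) ^ d *
        (2 * (Real.log (((2 ^ (d * (k - ℓ)) : ℕ) : ℝ) + 1) + 1)) := by
  have hcard := log_card_bound h s₀
  rw [GPL_mul hβ.ne']
  set Y := β * ((2:ℝ) ^ k) ^ d / 2 * Qi J (coarse L ℓ (stepFun L k s₀)) with hY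
  set E1 := β * ((2:ℝ) ^ k) ^ d / 2 * (3 * (C * ((2:ℝ) ^ ℓ)⁻¹ * (L:ℝ) ^ d)) with hE1
  have hs : ∀ s ∈ Eset h s₀, |-β * Ham L k J s - Y| ≤ E1 := by
    intro s hs
    have hs' := (Finset.mem_filter.1 hs).2
    have := Ham_bound hβ.le hC0 hC h s
    rw [(coarse_eq_iff h s s₀).2 hs'] at this
    exact this
  have hne : s₀ ∈ Eset h s₀ := by simp [Eset]
  have hpos : (0:ℝ) < (Eset h s₀).card := by
    exact_mod_cast Finset.card_pos.2 ⟨s₀, hne⟩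
  have hup : ∑ s ∈ Eset h s₀, Real.exp (-β * Ham L k J s)
      ≤ (Eset h s₀).card * Real.exp (Y + E1) := by
    rw [← nsmul_eq_mul]
    refine Finset.sum_le_card_nsmul _ _ _ fun s h' => ?_
    apply Real.exp_le_exp.2
    linarith [(abs_le.1 (hs s h')).2]
  have hlo : (Eset h s₀).card * Real.exp (Y - E1)
      ≤ ∑ s ∈ Eset h s₀, Real.exp (-β * Ham L k J s) := by
    rw [← nsmul_eq_mul]
    refine Finset.card_nsmul_le_sum _ _ _ fun s h' => ?_
    apply Real.exp_le_exp.2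
    linarith [(abs_le.1 (hs s h')).1]
  have h1 := Real.log_le_log (by positivity) hlo
  have h2 := Real.log_le_log (lt_of_lt_of_le (by positivity) hlo) hup
  rw [Real.log_mul hpos.ne' (Real.exp_pos _).ne', Real.log_exp] at h1 h2
  rw [abs_le] at hcard ⊢
  constructor <;> linarith [hcard.1, hcard.2]

end

section
variable {d L k ℓ : ℕ} [Fact ((0:ℝ) < L)]

lemma Eset_numOnes (h : ℓ ≤ k) (s s₀ : ConfigSpace d L k) (hs : s ∈ Eset h s₀) :
    numOnes L k s = numOnes L k s₀ := by
  rw [← sum_occ h s, ← sum_occ h s₀]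
  exact Finset.sum_congr rfl fun A _ => (Finset.mem_filter.1 hs).2 A

/-- cell average -/
noncomputable def avg (σ : Torus d L → ℝ) (A : Site d L ℓ) : ℝ :=
  ((2:ℝ) ^ ℓ) ^ d * ∫ x in cell A, σ x

lemma avg_spec (σ : Torus d L → ℝ) (A : Site d L ℓ) :
    ∫ x in cell A, σ x = ((2:ℝ) ^ ℓ)⁻¹ ^ d * avg σ A := by
  unfold avg
  rw [inv_pow]
  have h2 : (0:ℝ) < ((2:ℝ) ^ ℓ) ^ d := by positivity
  field_simp

lemma avg_jensen (σ : Torus d L → ℝ) (hσ : Measurable σ) (hb : ∀ x, σ x ∈ Set.Icc (-1:ℝ) 1)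
    (A : Site d L ℓ) : avg σ A ∈ Set.Icc (-1:ℝ) 1 ∧
      ient (avg σ A) ≤ ((2:ℝ) ^ ℓ) ^ d * ∫ x in cell A, ient (σ x) := by
  have hintg : Integrable σ := integrable_of_bdd hσ (fun x => abs_le.2 (hb x))
  have hpos : (0:ℝ) < ((2:ℝ) ^ ℓ)⁻¹ ^ d := by positivity
  have h0 : volume (cell A) ≠ 0 := by
    rw [volume_cell]; simpa using hpos
  have ht : volume (cell A) ≠ ⊤ := by rw [volume_cell]; exact ENNReal.ofReal_ne_top
  obtain ⟨M, hM⟩ := isCompact_Icc.exists_bound_of_continuousOn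
    (continuous_ient.continuousOn (s := Set.Icc (-1:ℝ) 1))
  have hint2 : Integrable (ient ∘ σ) :=
    integrable_of_bdd (continuous_ient.measurable.comp hσ) (fun x => hM _ (hb x))
  have hav : ∀ f : Torus d L → ℝ, ⨍ x in cell A, f x = ((2:ℝ) ^ ℓ) ^ d * ∫ x in cell A, f x := by
    intro f
    rw [setAverage_eq, Measure.real, volume_real_cell, smul_eq_mul, inv_pow, inv_inv]
  have hmem := Convex.set_average_mem (convex_Icc (-1:ℝ) 1) isClosed_Icc h0 ht
    (Filter.Eventually.of_forall fun x => hb x) hintg.integrableOn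
  have hj := convexOn_ient.map_set_average_le continuous_ient.continuousOn isClosed_Icc h0 ht
    (Filter.Eventually.of_forall fun x => hb x) hintg.integrableOn hint2.integrableOn
  rw [hav] at hmem hj
  rw [hav] at hj
  exact ⟨hmem, hj⟩

lemma jensen_total (h : ℓ ≤ k) (σ : Torus d L → ℝ) (hσ : Measurable σ)
    (hb : ∀ x, σ x ∈ Set.Icc (-1:ℝ) 1) :
    ∑ A : Site d L ℓ, ((2 ^ (d * (k - ℓ)) : ℕ) : ℝ) * ient (avg σ A)
      ≤ ((2:ℝ) ^ k) ^ d * ∫ x, ient (σ x) := by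
  obtain ⟨M, hM⟩ := isCompact_Icc.exists_bound_of_continuousOn
    (continuous_ient.continuousOn (s := Set.Icc (-1:ℝ) 1))
  have hint2 : Integrable (fun x => ient (σ x)) :=
    integrable_of_bdd (continuous_ient.measurable.comp hσ) (fun x => hM _ (hb x))
  have h1 := integral_site_mul (n := ℓ) (fun _ => (1:ℝ)) _ hint2
  simp only [one_mul] at h1
  rw [h1, pow_split h, Finset.mul_sum]
  refine Finset.sum_le_sum fun A _ => ?_
  have := (avg_jensen σ hσ hb A).2
  have hn : (0:ℝ) ≤ ((2 ^ (d * (k - ℓ)) : ℕ) : ℝ) := by positivity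
  have h2 := mul_le_mul_of_nonneg_left this hn
  linarith

/-- existence of a microscopic configuration close to the minimizer -/
lemma exists_spin_approx (h : ℓ ≤ k) (Np : ℕ) (m : ℝ)
    (hm : m = 2 * (Np:ℝ) / (2 ^ (d * k) * (L:ℝ) ^ d) - 1)
    (σ : Torus d L → ℝ) (hσ : Measurable σ) (hb : ∀ x, σ x ∈ Set.Icc (-1:ℝ) 1)
    (hmean : ((L:ℝ) ^ (-(d:ℤ)) * ∫ r, σ r) = m) :
    ∃ s : ConfigSpace d L k, numOnes L k s = Np ∧
      ∀ A : Site d L ℓ, |prof h s A - avg σ A| ≤ 2 / ((2 ^ (d * (k - ℓ)) : ℕ) : ℝ) := by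
  have hL : (0:ℝ) < L := Fact.out
  set n : ℕ := 2 ^ (d * (k - ℓ)) with hn
  have hn0 : (0:ℝ) < (n:ℝ) := by rw [hn]; positivity
  have hintg : Integrable σ := integrable_of_bdd hσ (fun x => abs_le.2 (hb x))
  obtain ⟨a, ha1, ha2, ha3⟩ := exists_rounding (Finset.univ : Finset (Site d L ℓ))
    (fun A => n * (1 + avg σ A) / 2) n
    (fun A => by have := (avg_jensen σ hσ hb A).1.1; have : 0 ≤ 1 + avg σ A := by linarith
                 positivity)
    (fun A => by have := (avg_jensen σ hσ hb A).1.2; nlinarith)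
  have hsum : ∑ A : Site d L ℓ, n * (1 + avg σ A) / 2 = Np := by
    have h1 := integral_site_mul (n := ℓ) (fun _ => (1:ℝ)) _ hintg
    simp only [one_mul] at h1
    have h2 : ∑ A : Site d L ℓ, avg σ A = ((2:ℝ) ^ ℓ) ^ d * ∫ x, σ x := by
      rw [h1, Finset.mul_sum]; rfl
    have h3 : ∫ x, σ x = (L:ℝ) ^ d * m := by
      rw [← hmean, zpow_neg, zpow_natCast]
      field_simp
    rw [← Finset.sum_div, ← Finset.mul_sum, Finset.sum_add_distrib, h2, h3, hm, Finset.sum_const,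
      Finset.card_univ, nsmul_eq_mul, card_site]
    have e : (2:ℝ) ^ (d * k) = ((2:ℝ) ^ ℓ) ^ d * (n : ℝ) := by
      rw [hn, ← pow_split h, ← pow_mul, mul_comm]
    rw [e]
    have h2 : (0:ℝ) < ((2:ℝ) ^ ℓ) ^ d := by positivity
    field_simp
    ring
  rw [hsum, Nat.floor_natCast] at ha3
  have hcard := card_occ (parent k ℓ h) n (card_fiber (d := d) (L := L) h) a
  have hpos : 0 < ∏ A, n.choose (a A) := Finset.prod_pos fun A _ => Nat.choose_pos (ha1 A)
  rw [← hcard] at hpos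
  obtain ⟨s, hs⟩ := Finset.card_pos.1 hpos
  have hs' := (Finset.mem_filter.1 hs).2
  refine ⟨s, ?_, fun A => ?_⟩
  · rw [← sum_occ h s, ← ha3]
    exact Finset.sum_congr rfl fun A _ => hs' A
  · unfold prof
    rw [hs' A, ← hn]
    have e : 2 * (a A : ℝ) / n - 1 - avg σ A = 2 / n * ((a A : ℝ) - n * (1 + avg σ A) / 2) := by
      field_simp
      ring
    rw [e, abs_mul, abs_of_pos (by positivity : (0:ℝ) < 2 / n)]
    have := mul_le_mul_of_nonneg_left (ha2 A) (by positivity : (0:ℝ) ≤ 2 / n)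
    linarith

/-- the free energy of the approximating configuration -/
lemma config_energy {J : ℝ → ℝ} {β C C2 : ℝ} (hβ : 0 < β)
    (hC : ∀ (L n : ℕ) [Fact ((0:ℝ) < L)] (σ : Torus d L → ℝ), Measurable σ →
      (∀ x, |σ x| ≤ 1) → |Qi J σ - Qn n J σ| ≤ C * ((2:ℝ) ^ n)⁻¹ * (L:ℝ) ^ d)
    (hC2 : ∀ (L : ℕ) [Fact ((0:ℝ) < L)] (σ τ : Torus d L → ℝ) (ε : ℝ), Measurable σ →
      Measurable τ →
      (∀ x, |σ x| ≤ 1) → (∀ x, |τ x| ≤ 1) → 0 ≤ ε → (∀ x, |σ x - τ x| ≤ ε) →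
      |Qi J σ - Qi J τ| ≤ C2 * ε * (L:ℝ) ^ d)
    (h : ℓ ≤ k)
    (σ : Torus d L → ℝ) (hσ : Measurable σ) (hb : ∀ x, σ x ∈ Set.Icc (-1:ℝ) 1)
    (s : ConfigSpace d L k)
    (hs : ∀ A : Site d L ℓ, |prof h s A - avg σ A| ≤ 2 / ((2 ^ (d * (k - ℓ)) : ℕ) : ℝ)) :
    β * ((2:ℝ) ^ k) ^ d * GPL d L β J (coarse L ℓ (stepFun L k s))
      ≤ β * ((2:ℝ) ^ k) ^ d * GPL d L β J σ
        + ((2:ℝ) ^ ℓ) ^ d * (L:ℝ) ^ d * (2 * (Real.log (((2 ^ (d * (k - ℓ)) : ℕ) : ℝ)) + 1))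
        + β * ((2:ℝ) ^ k) ^ d / 2 * (C2 * (2 / ((2 ^ (d * (k - ℓ)) : ℕ) : ℝ)) * (L:ℝ) ^ d
          + 2 * (C * ((2:ℝ) ^ ℓ)⁻¹ * (L:ℝ) ^ d)) := by
  rw [GPL_mul hβ.ne', GPL_mul hβ.ne', coarse_eq h, integral_ient_site h]
  have hσ1 : ∀ x, |σ x| ≤ 1 := fun x => abs_le.2 (hb x)
  have hav1 : ∀ x : Torus d L, |avg σ (siteOf L ℓ x)| ≤ 1 :=
    fun x => abs_le.2 (avg_jensen σ hσ hb _).1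
  have q1 := hC L ℓ σ hσ hσ1
  have q2 := hC L ℓ (fun x => avg σ (siteOf L ℓ x)) (measurable_comp_siteOf _) hav1
  rw [← Qn_avg J σ (integrable_of_bdd hσ hσ1) (avg σ) (avg_spec σ)] at q2
  have q3 := hC2 L (fun x => prof h s (siteOf L ℓ x)) (fun x => avg σ (siteOf L ℓ x)) _
    (measurable_comp_siteOf _) (measurable_comp_siteOf _)
    (fun x => abs_le.2 (prof_mem h s _)) hav1 (by positivity) (fun x => hs _)
  have q4 : Qi J σ - Qi J (fun x : Torus d L => prof h s (siteOf L ℓ x))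
      ≤ C2 * (2 / ((2 ^ (d * (k - ℓ)) : ℕ) : ℝ)) * (L:ℝ) ^ d
          + 2 * (C * ((2:ℝ) ^ ℓ)⁻¹ * (L:ℝ) ^ d) := by
    rw [abs_le] at q1 q2 q3
    linarith [q1.1, q1.2, q2.1, q2.2, q3.1, q3.2]
  have q5 := mul_le_mul_of_nonneg_left q4 (by positivity : 0 ≤ β * ((2:ℝ) ^ k) ^ d / 2)
  have e1 := jensen_total h σ hσ hb
  have e2 : ∑ A : Site d L ℓ, ((2 ^ (d * (k - ℓ)) : ℕ) : ℝ) * ient (prof h s A)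
      - ∑ A : Site d L ℓ, ((2 ^ (d * (k - ℓ)) : ℕ) : ℝ) * ient (avg σ A)
      ≤ ((2:ℝ) ^ ℓ) ^ d * (L:ℝ) ^ d * (2 * (Real.log (((2 ^ (d * (k - ℓ)) : ℕ) : ℝ)) + 1)) := by
    rw [← Finset.sum_sub_distrib, ← card_site, ← nsmul_eq_mul]
    refine Finset.sum_le_card_nsmul _ _ _ fun A _ => ?_
    have := ient_diff (2 ^ (d * (k - ℓ))) (by positivity) _ _ (prof_mem h s A)
      (avg_jensen σ hσ hb A).1 (hs A)
    rw [← mul_sub]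
    refine le_trans (mul_le_mul_of_nonneg_left (le_abs_self _) (by positivity)) this
  linarith

/-- upper bound on the partition function -/
lemma Z_upper {J : ℝ → ℝ} {β B : ℝ} (h : ℓ ≤ k) (Np : ℕ)
    (hB : ∀ s₀ : ConfigSpace d L k, numOnes L k s₀ = Np →
      Real.log (∑ s ∈ Eset h s₀, Real.exp (-β * Ham L k J s)) ≤ B) :
    ∑ s ∈ Finset.univ.filter (fun s : ConfigSpace d L k => numOnes L k s = Np),
      Real.exp (-β * Ham L k J s)
      ≤ (((2 ^ (d * (k - ℓ)) : ℕ) : ℝ) + 1) ^ (Fintype.card (Site d L ℓ)) * Real.exp B := by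
  have hmap : ∀ s ∈ Finset.univ.filter (fun s : ConfigSpace d L k => numOnes L k s = Np),
      occ (parent k ℓ h) s ∈ Fintype.piFinset
        (fun _ : Site d L ℓ => Finset.range (2 ^ (d * (k - ℓ)) + 1)) := by
    intro s _
    rw [Fintype.mem_piFinset]
    intro A
    rw [Finset.mem_range]
    exact Nat.lt_succ_of_le (occ_le h s A)
  rw [← Finset.sum_fiberwise_of_maps_to hmap]
  have hcard : ((Fintype.piFinset
        (fun _ : Site d L ℓ => Finset.range (2 ^ (d * (k - ℓ)) + 1))).card : ℝ)
      = (((2 ^ (d * (k - ℓ)) : ℕ) : ℝ) + 1) ^ (Fintype.card (Site d L ℓ)) := by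
    rw [Fintype.card_piFinset, Finset.prod_const, Finset.card_range, Finset.card_univ]
    push_cast
    rfl
  rw [← hcard, ← nsmul_eq_mul]
  refine Finset.sum_le_card_nsmul _ _ _ fun a _ => ?_
  rcases Finset.eq_empty_or_nonempty (Finset.filter (fun s => occ (parent k ℓ h) s = a)
    (Finset.univ.filter (fun s : ConfigSpace d L k => numOnes L k s = Np))) with he | ⟨s₁, hs₁⟩
  · rw [he, Finset.sum_empty]; positivity
  · have h1 := (Finset.mem_filter.1 hs₁).2
    have h2 := (Finset.mem_filter.1 (Finset.mem_filter.1 hs₁).1).2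
    have h3 := hB s₁ h2
    have hne : s₁ ∈ Eset h s₁ := by simp [Eset]
    have hpos : 0 < ∑ s ∈ Eset h s₁, Real.exp (-β * Ham L k J s) :=
      Finset.sum_pos (fun s _ => Real.exp_pos _) ⟨s₁, hne⟩
    rw [Real.log_le_iff_le_exp hpos] at h3
    refine le_trans (Finset.sum_le_sum_of_subset_of_nonneg ?_ fun s _ _ => (Real.exp_pos _).le) h3
    intro s hs
    refine Finset.mem_filter.2 ⟨Finset.mem_univ _, fun A => ?_⟩
    rw [h1, (Finset.mem_filter.1 hs).2]

end

/-- The logarithmic factor. -/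
lemma log_n_bound {d k ℓ : ℕ} (hk : 2 ≤ k) :
    Real.log (((2 ^ (d * (k - ℓ)) : ℕ) : ℝ) + 1) + 1 ≤ ((d:ℝ) + 2) * (k * Real.log 2)
      ∧ 1 ≤ k * Real.log 2 := by
  have hl := Real.log_two_gt_d9
  have hk' : (2:ℝ) ≤ k := by exact_mod_cast hk
  have hK : 1 ≤ k * Real.log 2 := by nlinarith
  refine ⟨?_, hK⟩
  have h1 : (((2 ^ (d * (k - ℓ)) : ℕ) : ℝ) + 1) ≤ 2 ^ (d * k + 1) := by
    push_cast
    have : (2:ℝ) ^ (d * (k - ℓ)) ≤ 2 ^ (d * k) :=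
      pow_le_pow_right₀ (by norm_num) (Nat.mul_le_mul_left _ (Nat.sub_le _ _))
    have h1 : (1:ℝ) ≤ 2 ^ (d * k) := one_le_pow₀ (by norm_num)
    rw [pow_succ]; linarith
  have h2 := Real.log_le_log (by positivity) h1
  rw [Real.log_pow] at h2
  push_cast at h2 ⊢
  nlinarith

lemma gam_one {k ℓ : ℕ} (hk : 0 < k) : gam k ^ ((ℓ:ℝ) / (k:ℝ)) = ((2:ℝ) ^ ℓ)⁻¹ := by
  have hk' : (k:ℝ) ≠ 0 := by exact_mod_cast hk.ne'
  have e : gam k = (2:ℝ) ^ (-(k:ℝ)) := by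
    unfold gam
    rw [← Real.rpow_intCast]
    push_cast
    rfl
  rw [e, ← Real.rpow_mul (by norm_num)]
  have : -(k:ℝ) * ((ℓ:ℝ) / k) = -(ℓ:ℝ) := by field_simp
  rw [this, Real.rpow_neg (by norm_num), Real.rpow_natCast]

lemma gam_two {d k ℓ : ℕ} (hk : 0 < k) (h : ℓ ≤ k) :
    gam k ^ ((d:ℝ) * (1 - (ℓ:ℝ) / (k:ℝ))) = (((2 ^ (d * (k - ℓ)) : ℕ) : ℝ))⁻¹ := by
  have hk' : (k:ℝ) ≠ 0 := by exact_mod_cast hk.ne'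
  have e : gam k = (2:ℝ) ^ (-(k:ℝ)) := by
    unfold gam
    rw [← Real.rpow_intCast]
    push_cast
    rfl
  rw [e, ← Real.rpow_mul (by norm_num)]
  have : -(k:ℝ) * ((d:ℝ) * (1 - (ℓ:ℝ) / k)) = -((d * (k - ℓ) : ℕ) : ℝ) := by
    push_cast [Nat.cast_sub h]
    field_simp
  rw [this, Real.rpow_neg (by norm_num), Real.rpow_natCast]
  push_cast
  rfl

lemma gam_log (k : ℕ) : Real.log (1 / gam k) = k * Real.log 2 := by
  unfold gam
  rw [one_div, Real.log_inv, Real.log_zpow]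
  push_cast
  ring

set_option maxHeartbeats 2000000 in
/-- **Canonical large deviations, pointwise form** (Theorem `propos1`, first part): let
`m = 2N_p/(2^{dk}L^d) − 1` and let `σ*` be a Lipschitz (constant `Λ`) constrained minimizer of
`F` over measurable `σ : T_L → [−1,1]` with mean `m`. There is a constant `c > 0`, depending
only on `d`, `β`, `J` and `Λ`, such that for every coarse-grained configuration
`σ_δ = π^{(δ)}(s₀)` with mean `m`,
`| log P_{can,N_p}[E(σ_δ)] + β γ^{−d} (F(σ_δ) − F(σ*)) | ≤
  c γ^{−d} L^d (γ^δ + γ^{d(1−δ)}) log(1/γ)`, where `γ = 2^{−k}` and `δ = ℓ/k`. -/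
theorem canonical_ld_pointwise (d : ℕ) (hd : 1 ≤ d) (β : ℝ) (hβ : 1 < β)
    (J : ℝ → ℝ) (hJ : KacPotential d J) (Λ : ℝ) :
    ∃ c : ℝ, 0 < c ∧
      ∀ (L k ℓ : ℕ) [Fact ((0:ℝ) < L)], 2 ≤ L → 1 ≤ ℓ → ℓ < k →
      ∀ Np : ℕ, Np ≤ 2 ^ (d * k) * L ^ d →
      ∀ m : ℝ, m = 2 * (Np:ℝ) / (2 ^ (d * k) * (L:ℝ) ^ d) - 1 →
      ∀ σs : Torus d L → ℝ, Measurable σs → (∀ x, σs x ∈ Set.Icc (-1:ℝ) 1) →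
        ((L:ℝ) ^ (-(d:ℤ)) * ∫ r, σs r) = m →
        (∀ σ : Torus d L → ℝ, Measurable σ → (∀ x, σ x ∈ Set.Icc (-1:ℝ) 1) →
          ((L:ℝ) ^ (-(d:ℤ)) * ∫ r, σ r) = m → GPL d L β J σs ≤ GPL d L β J σ) →
        (∀ x y, |σs x - σs y| ≤ Λ * torusDist x y) →
      ∀ s₀ : ConfigSpace d L k,
        ((L:ℝ) ^ (-(d:ℤ)) * ∫ r, coarse L ℓ (stepFun L k s₀) r) = m →
        |Real.log (Pcan L k β J Np
              {s | coarse L ℓ (stepFun L k s) = coarse L ℓ (stepFun L k s₀)})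
            + β * ((2:ℝ) ^ k) ^ d *
                (GPL d L β J (coarse L ℓ (stepFun L k s₀)) - GPL d L β J σs)|
          ≤ c * ((2:ℝ) ^ k) ^ d * (L:ℝ) ^ d *
              (gam k ^ ((ℓ:ℝ) / (k:ℝ)) + gam k ^ ((d:ℝ) * (1 - (ℓ:ℝ) / (k:ℝ)))) *
              Real.log (1 / gam k) := by
  obtain ⟨C, hC0, hC⟩ := Qi_sub_Qn hJ
  obtain ⟨C2, hC20, hC2⟩ := Qi_sub_Qi hJ
  have hβ0 : 0 < β := by linarith
  refine ⟨4 * (β * C) + 7 * ((d:ℝ) + 2) + β * C2 + 1, by positivity, ?_⟩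
  intro L k ℓ _ hL2 hℓ hlk Np hNp m hm σs hσm hσb hσmean hmin _ s₀ hs₀
  have h : ℓ ≤ k := hlk.le
  have hk0 : 0 < k := by omega
  have hLpos : (0:ℝ) < L := Fact.out
  rw [gam_one hk0, gam_two hk0 h, gam_log]
  obtain ⟨hT, hK⟩ := log_n_bound (d := d) (k := k) (ℓ := ℓ) (by omega)
  have hps := pow_split (d := d) h
  have hn1 : (1:ℝ) ≤ ((2 ^ (d * (k - ℓ)) : ℕ) : ℝ) := by
    exact_mod_cast Nat.one_le_two_pow
  have hnum₀ : numOnes L k s₀ = Np := (numOnes_eq_iff h s₀ Np m hm).1 hs₀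
  -- the numerator
  have hfil : (Finset.univ.filter (fun s : ConfigSpace d L k =>
      s ∈ {s | coarse L ℓ (stepFun L k s) = coarse L ℓ (stepFun L k s₀)} ∧ numOnes L k s = Np))
      = Eset h s₀ := by
    ext s
    constructor
    · intro hs
      have := (Finset.mem_filter.1 hs).2.1
      exact Finset.mem_filter.2 ⟨Finset.mem_univ _, (coarse_eq_iff h s s₀).1 this⟩
    · intro hs
      refine Finset.mem_filter.2 ⟨Finset.mem_univ _, ?_, ?_⟩
      · exact (coarse_eq_iff h s s₀).2 (Finset.mem_filter.1 hs).2
      · rw [Eset_numOnes h s s₀ hs, hnum₀]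
  have hself : ∀ s : ConfigSpace d L k, s ∈ Eset h s := fun s => by simp [Eset]
  have hpos : ∀ s : ConfigSpace d L k,
      0 < ∑ t ∈ Eset h s, Real.exp (-β * Ham L k J t) := fun s =>
    Finset.sum_pos (fun _ _ => Real.exp_pos _) ⟨s, hself s⟩
  have hZlow : ∀ s : ConfigSpace d L k, numOnes L k s = Np →
      ∑ t ∈ Eset h s, Real.exp (-β * Ham L k J t) ≤
      ∑ s ∈ Finset.univ.filter (fun s : ConfigSpace d L k => numOnes L k s = Np),
        Real.exp (-β * Ham L k J s) := by
    intro s hs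
    refine Finset.sum_le_sum_of_subset_of_nonneg ?_ (fun _ _ _ => (Real.exp_pos _).le)
    intro t ht
    exact Finset.mem_filter.2 ⟨Finset.mem_univ _, by rw [Eset_numOnes h t s ht, hs]⟩
  have hZpos := (hpos s₀).trans_le (hZlow s₀ hnum₀)
  have hls := fun s => log_sum_bound (L := L) hβ0 hC0 hC h s
  obtain ⟨s', hs'1, hs'2⟩ := exists_spin_approx h Np m hm σs hσm hσb hσmean
  have hce := config_energy hβ0 hC hC2 h σs hσm hσb s' hs'2
  have hlow := Real.log_le_log (hpos s') (hZlow s' hs'1)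
  have hup := Z_upper (J := J) (β := β) (B := -(β * ((2:ℝ) ^ k) ^ d * GPL d L β J σs) +
      (β * ((2:ℝ) ^ k) ^ d / 2 * (3 * (C * ((2:ℝ) ^ ℓ)⁻¹ * (L:ℝ) ^ d)) +
        ((2:ℝ) ^ ℓ) ^ d * (L:ℝ) ^ d *
        (2 * (Real.log (((2 ^ (d * (k - ℓ)) : ℕ) : ℝ) + 1) + 1)))) h Np (by
    intro s hs
    have h1 := (abs_le.1 (hls s)).2
    have h2 := hmin _ (coarse_measurable h s) (fun x => abs_le.1 (coarse_abs h s x))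
      ((numOnes_eq_iff h s Np m hm).2 hs)
    have h3 : β * ((2:ℝ) ^ k) ^ d * GPL d L β J σs ≤
      β * ((2:ℝ) ^ k) ^ d * GPL d L β J (coarse L ℓ (stepFun L k s)) := by gcongr
    linarith)
  have hup' := Real.log_le_log hZpos hup
  rw [Real.log_mul (by positivity) (Real.exp_pos _).ne', Real.log_exp, Real.log_pow,
    card_site] at hup'
  unfold Pcan
  rw [hfil, Real.log_div (hpos s₀).ne' hZpos.ne']
  have h0 := abs_le.1 (hls s₀)
  have h1 := (abs_le.1 (hls s')).1
  have hlogn : Real.log ((2 ^ (d * (k - ℓ)) : ℕ) : ℝ) ≤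
      Real.log (((2 ^ (d * (k - ℓ)) : ℕ) : ℝ) + 1) :=
    Real.log_le_log (by linarith) (by linarith)
  clear hls hZlow hpos hfil hmin hC hC2 hup hZpos hself hs'2
  generalize Real.log (∑ t ∈ Eset h s₀, Real.exp (-β * Ham L k J t)) = N0 at *
  generalize Real.log (∑ t ∈ Eset h s', Real.exp (-β * Ham L k J t)) = N1 at *
  generalize Real.log (∑ s ∈ Finset.univ.filter
    (fun s : ConfigSpace d L k => numOnes L k s = Np), Real.exp (-β * Ham L k J s)) = Z at *
  generalize GPL d L β J (coarse L ℓ (stepFun L k s₀)) = G0 at *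
  generalize GPL d L β J (coarse L ℓ (stepFun L k s')) = G1 at *
  generalize GPL d L β J σs = Gs at *
  generalize Real.log (((2 ^ (d * (k - ℓ)) : ℕ) : ℝ) + 1) = l1 at *
  generalize Real.log ((2 ^ (d * (k - ℓ)) : ℕ) : ℝ) = l0 at *
  generalize ((2 ^ (d * (k - ℓ)) : ℕ) : ℝ) = n at *
  have hY0 : (0:ℝ) < ((2:ℝ) ^ ℓ) ^ d := by positivity
  have hX0 : (0:ℝ) < ((2:ℝ) ^ k) ^ d := by positivity
  have hg1 : (0:ℝ) < ((2:ℝ) ^ ℓ)⁻¹ := by positivity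
  have hD0 : (0:ℝ) < (L:ℝ) ^ d := by positivity
  generalize ((2:ℝ) ^ ℓ) ^ d = Y at *
  generalize ((2:ℝ) ^ k) ^ d = X at *
  generalize ((2:ℝ) ^ ℓ)⁻¹ = g1 at *
  generalize (L:ℝ) ^ d = D at *
  generalize (k:ℝ) * Real.log 2 = K at *
  have hn0 : 0 < n := by linarith
  have hg2 : 0 < n⁻¹ := by positivity
  have hY : Y = X * n⁻¹ := by rw [hps]; field_simp
  rw [div_eq_mul_inv 2 n] at hce
  generalize n⁻¹ = g2 at *
  subst hY
  have hP : 0 < X * D := by positivity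
  have hPg2 : 0 < X * g2 * D := by positivity
  have hPg1 : 0 < X * D * g1 := by positivity
  have a1 : X * g2 * D * (l1 + 1) ≤ X * g2 * D * (((d:ℝ) + 2) * K) := by gcongr
  have a2 : X * g2 * D * (l0 + 1) ≤ X * g2 * D * (((d:ℝ) + 2) * K) := by
    gcongr
    linarith
  have hβC : 0 ≤ β * C := by positivity
  have hβC2 : 0 ≤ β * C2 := by positivity
  have b1 : β * C * (X * D * g1) * 1 ≤ β * C * (X * D * g1) * K := by gcongr
  have b2 : β * C2 * (X * g2 * D) * 1 ≤ β * C2 * (X * g2 * D) * K := by gcongr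
  have c1 : 0 ≤ β * C * (X * g2 * D) * K := by positivity
  have c2 : 0 ≤ β * C2 * (X * D * g1) * K := by positivity
  have c3 : 0 ≤ ((d:ℝ) + 2) * (X * D * g1) * K := by positivity
  have c4 : 0 ≤ (X * D * g1) * K := by positivity
  have c5 : 0 ≤ (X * g2 * D) * K := by positivity
  have c6 : 0 ≤ ((d:ℝ) + 2) * (X * g2 * D) * K := by positivity
  have c7 : 0 ≤ β * C * (X * D * g1) * K := by positivity
  have c8 : 0 ≤ β * C2 * (X * g2 * D) * K := by positivity
  rw [abs_le]
  constructor <;> linarith
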